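/- arXiv:1011.1785 — 3 statements merged into one kernel-verified Lean document; each statement's English description precedes it below -/
import Mathlib

section
/- Let g ∈ C¹(ℝ, ℝ) with g'(0) > 0, x·g(x) > 0 for x ≠ 0, and ∫₀^{±∞} g(x) dx = +∞, and let f₁, f₃, …, f_{2N+1} : ℝ → ℝ be continuously differentiable, with all even-index coefficients f_{2k} ≡ 0. Set G(x) = ∫₀^x g(s) ds. Assume: (i) for every k = 0, …, N and all x ≠ 0, x·[ (2k+1)·f_{2k+1}(x)·g(x) + 2G(x)·(f_{2k+1}'(x)·g(x) − f_{2k+1}(x)·g'(x))/g(x) ] ≥ 0 (condition (H_g^{2k+1})); (ii) there exists a sequence x_m → 0 such that for every m some k(m) makes this inequality strict at x_m; (iii) f₁(0) < 0 and there exists ε > 0 with f₁(x) > 0 for all x ∈ ℝ \ [−ε, ε]; (iv) there exists 1 ≤ k̄ ≤ N such that f_{2k̄+1}(x) > 0 on [−ε, ε]. Then the system ẋ = y, ẏ = −g(x) − Σ_{k=0}^{N} f_{2k+1}(x)·y^{2k+1} has exactly one limit cycle, which attracts every non-constant solution. -/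
open Set Filter Metric Real Topology intervalIntegral

noncomputable section

/-- `γ` solves the planar ODE with vector field `F` at every time in `s`. -/
def IsSolOn (F : ℝ × ℝ → ℝ × ℝ) (γ : ℝ → ℝ × ℝ) (s : Set ℝ) : Prop :=
  ∀ t ∈ s, HasDerivAt γ (F (γ t)) t

/-- A cycle: a non-constant `T`-periodic solution (with `T > 0`). -/
def IsCycle (F : ℝ × ℝ → ℝ × ℝ) (γ : ℝ → ℝ × ℝ) (T : ℝ) : Prop :=
  (∀ t, HasDerivAt γ (F (γ t)) t) ∧ 0 < T ∧ (∀ t, γ (t + T) = γ t) ∧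
    ∃ t₁ t₂, γ t₁ ≠ γ t₂

/-- A limit cycle: a cycle whose orbit has a neighbourhood containing no orbit
of any other cycle. -/
def IsLimitCycle (F : ℝ × ℝ → ℝ × ℝ) (γ : ℝ → ℝ × ℝ) (T : ℝ) : Prop :=
  IsCycle F γ T ∧
    ∃ U : Set (ℝ × ℝ), IsOpen U ∧ range γ ⊆ U ∧
      ∀ (γ' : ℝ → ℝ × ℝ) (T' : ℝ), IsCycle F γ' T' →
        range γ' ≠ range γ → ¬ range γ' ⊆ U

/-- There is a non-trivial positive semi-orbit of the system contained in `Z`. -/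
def HasSemiOrbitIn (F : ℝ × ℝ → ℝ × ℝ) (Z : Set (ℝ × ℝ)) : Prop :=
  ∃ (γ : ℝ → ℝ × ℝ) (t₀ : ℝ), IsSolOn F γ (Ici t₀) ∧
    (∃ t₁ ∈ Ici t₀, ∃ t₂ ∈ Ici t₀, γ t₁ ≠ γ t₂) ∧ γ '' Ici t₀ ⊆ Z

/-- There is a non-trivial (full) orbit of the system contained in `Z`. -/
def HasOrbitIn (F : ℝ × ℝ → ℝ × ℝ) (Z : Set (ℝ × ℝ)) : Prop :=
  ∃ γ : ℝ → ℝ × ℝ, (∀ t, HasDerivAt γ (F (γ t)) t) ∧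
    (∃ t₁ t₂, γ t₁ ≠ γ t₂) ∧ range γ ⊆ Z

/-- The vector field of system (S): ẋ = y, ẏ = −x − y·φ(x,y). -/
def phiVF (φ : ℝ × ℝ → ℝ) : ℝ × ℝ → ℝ × ℝ :=
  fun p => (p.2, -p.1 - p.2 * φ p)

/-- `G(x) = ∫₀ˣ g(s) ds`. -/
def Gfun (g : ℝ → ℝ) (x : ℝ) : ℝ := ∫ s in (0:ℝ)..x, g s

/-- The vector field of ẋ = y, ẏ = −g(x) − Σ_{k=0}^{N} f_{2k+1}(x) y^{2k+1},
where `o k` stands for `f_{2k+1}`. -/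
def gOddVF (g : ℝ → ℝ) (N : ℕ) (o : ℕ → ℝ → ℝ) : ℝ × ℝ → ℝ × ℝ :=
  fun p => (p.2, -g p.1 - ∑ k ∈ Finset.range (N + 1), o k p.1 * p.2 ^ (2 * k + 1))

/-- The divergence of `gOddVF g N o`. -/
def gOddDiv (N : ℕ) (o : ℕ → ℝ → ℝ) : ℝ × ℝ → ℝ :=
  fun p => -∑ k ∈ Finset.range (N + 1), (2 * (k : ℝ) + 1) * o k p.1 * p.2 ^ (2 * k)

/-- The left-hand side of condition (H_g^{2k+1}) for a coefficient `f`. -/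
def HgLHS (g : ℝ → ℝ) (k : ℕ) (f : ℝ → ℝ) (x : ℝ) : ℝ :=
  x * ((2 * (k : ℝ) + 1) * f x * g x
    + 2 * Gfun g x * (deriv f x * g x - f x * deriv g x) / g x)


lemma grow_mono {a b : ℝ} {δ δ' A : ℝ → ℝ} (hA : ContinuousOn A (Icc a b))
    (hδ : ∀ l ∈ Icc a b, HasDerivAt δ (δ' l) l)
    (h : ∀ l ∈ Icc a b, A l * δ l ≤ δ' l) (hab : a ≤ b) :
    ∃ c : ℝ, 0 < c ∧ δ a ≤ c * δ b := by
  set A' : ℝ → ℝ := IccExtend hab (fun l => A l) with hA'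
  have hc : Continuous A' := (continuousOn_iff_continuous_restrict.1 hA).Icc_extend'
  have hAe : ∀ l ∈ Icc a b, A' l = A l := fun l hl => by
    rw [hA', IccExtend_of_mem hab _ hl]
  set I : ℝ → ℝ := fun l => ∫ s in a..l, A' s with hI
  have hId : ∀ l, HasDerivAt I (A' l) l := fun l => hc.integral_hasStrictDerivAt a l |>.hasDerivAt
  have hd : ∀ l ∈ Icc a b, HasDerivAt (fun l => δ l * Real.exp (-I l))
      (δ' l * Real.exp (-I l) + δ l * (Real.exp (-I l) * (-A' l))) l := fun l hl =>
    (hδ l hl).mul ((hId l).neg.exp)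
  have hm : MonotoneOn (fun l => δ l * Real.exp (-I l)) (Icc a b) := by
    apply monotoneOn_of_deriv_nonneg (convex_Icc a b)
    · exact fun l hl => (hd l hl).continuousAt.continuousWithinAt
    · exact fun l hl => (hd l (interior_subset hl)).differentiableAt.differentiableWithinAt
    · intro l hl
      have hl' := interior_subset hl
      rw [(hd l hl').deriv, hAe l hl']
      have := h l hl'
      have e := Real.exp_pos (-I l)
      nlinarith
  refine ⟨Real.exp (-I b), Real.exp_pos _, ?_⟩
  have := hm (left_mem_Icc.2 hab) (right_mem_Icc.2 hab) hab
  have hIa : I a = 0 := by simp [hI]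
  simp only [hIa] at this
  simpa [mul_comm] using this

/-- right-hand side of the scalar equation -/
def Vz (N : ℕ) (Q : ℕ → ℝ → ℝ) (l z : ℝ) : ℝ :=
  -z⁻¹ - z - ∑ k ∈ Finset.range (N+1), Q k l * z ^ (2*k)

lemma Vz_sub (N : ℕ) (Q : ℕ → ℝ → ℝ) (l p q : ℝ) (hp : 0 < p) (hq : 0 < q) :
    Vz N Q l p - Vz N Q l q = ((p*q)⁻¹ - 1 - ∑ k ∈ Finset.range (N+1), Q k l *
      ∑ i ∈ Finset.range (2*k), p^i * q^(2*k-1-i)) * (p - q) := by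
  have h1 : (∑ k ∈ Finset.range (N+1), Q k l *
      ∑ i ∈ Finset.range (2*k), p^i * q^(2*k-1-i)) * (p - q) =
      ∑ k ∈ Finset.range (N+1), Q k l * p ^ (2*k) - ∑ k ∈ Finset.range (N+1), Q k l * q ^ (2*k) := by
    rw [Finset.sum_mul, ← Finset.sum_sub_distrib]
    refine Finset.sum_congr rfl fun k _ => ?_
    rw [mul_assoc, (Commute.all p q).geom_sum₂_mul]; ring
  have h2 : ((p*q)⁻¹) * (p-q) = - p⁻¹ + q⁻¹ := by field_simp; ring
  rw [sub_mul, sub_mul, h1, h2]; unfold Vz; ring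

lemma cmp_core {N : ℕ} {Q : ℕ → ℝ → ℝ} (hQ : ∀ k ∈ Finset.range (N+1), Continuous (Q k))
    {a b : ℝ} (hab : a ≤ b) {p q p' : ℝ → ℝ}
    (hp : ∀ l ∈ Icc a b, 0 < p l) (hq : ∀ l ∈ Icc a b, 0 < q l)
    (hpd : ∀ l ∈ Icc a b, HasDerivAt p (p' l) l)
    (hqd : ∀ l ∈ Icc a b, HasDerivAt q (Vz N Q l (q l)) l) :
    ((∀ l ∈ Icc a b, Vz N Q l (p l) ≤ p' l) → q a < p a → q b < p b) ∧
    ((∀ l ∈ Icc a b, p' l ≤ Vz N Q l (p l)) → q b < p b → q a < p a) := by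
  set A : ℝ → ℝ := fun l => ((p l*q l)⁻¹ - 1 - ∑ k ∈ Finset.range (N+1), Q k l *
      ∑ i ∈ Finset.range (2*k), p l^i * q l^(2*k-1-i)) with hA
  have cp : ContinuousOn p (Icc a b) := fun l hl => (hpd l hl).continuousAt.continuousWithinAt
  have cq : ContinuousOn q (Icc a b) := fun l hl => (hqd l hl).continuousAt.continuousWithinAt
  have cA : ContinuousOn A (Icc a b) := by
    refine ((ContinuousOn.inv₀ (cp.mul cq) fun l hl => ?_).sub continuousOn_const).sub ?_
    · exact (mul_pos (hp l hl) (hq l hl)).ne'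
    · refine continuousOn_finset_sum _ fun k hk => ((hQ k hk).continuousOn).mul ?_
      exact continuousOn_finset_sum _ fun i _ => (cp.pow _).mul (cq.pow _)
  have key : ∀ l ∈ Icc a b, A l * (p l - q l) = Vz N Q l (p l) - Vz N Q l (q l) :=
    fun l hl => (Vz_sub N Q l _ _ (hp l hl) (hq l hl)).symm
  constructor
  · intro h h0
    obtain ⟨c, hc, h1⟩ := grow_mono (δ := fun l => p l - q l) cA
      (fun l hl => (hpd l hl).sub (hqd l hl)) (fun l hl => by
        rw [key l hl]; linarith [h l hl]) hab
    have : 0 < c * (p b - q b) := by linarith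
    linarith [(pos_iff_pos_of_mul_pos this).1 hc]
  · intro h h0
    obtain ⟨c, hc, h1⟩ := grow_mono (δ := fun l => q l - p l) cA
      (fun l hl => (hqd l hl).sub (hpd l hl)) (fun l hl => by
        have := key l hl
        have := h l hl
        nlinarith) hab
    nlinarith

structure Arc (N : ℕ) (Q : ℕ → ℝ → ℝ) (z : ℝ → ℝ) (B s : ℝ) : Prop where
  pos : ∀ l < B, 0 < z l
  der : ∀ l < B, HasDerivAt z (Vz N Q l (z l)) l
  lim : Tendsto z (𝓝[<] B) (𝓝 0)
  ini : Tendsto (fun l => Real.exp l * z l) atBot (𝓝 s)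
  spos : 0 < s

lemma Vz_mono {N : ℕ} {Q : ℕ → ℝ → ℝ} (hm : ∀ k ∈ Finset.range (N+1), Monotone (Q k))
    {l l' z : ℝ} (h : l ≤ l') : Vz N Q l' z ≤ Vz N Q l z := by
  unfold Vz
  have : ∑ k ∈ Finset.range (N+1), Q k l * z ^ (2*k) ≤ ∑ k ∈ Finset.range (N+1), Q k l' * z ^ (2*k) := by
    refine Finset.sum_le_sum fun k hk => mul_le_mul_of_nonneg_right (hm k hk h) ?_
    rw [pow_mul]; positivity
  linarith

lemma Vz_anti {N : ℕ} {Q : ℕ → ℝ → ℝ} (hm : ∀ k ∈ Finset.range (N+1), Antitone (Q k))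
    {l l' z : ℝ} (h : l ≤ l') : Vz N Q l z ≤ Vz N Q l' z := by
  unfold Vz
  have : ∑ k ∈ Finset.range (N+1), Q k l' * z ^ (2*k) ≤ ∑ k ∈ Finset.range (N+1), Q k l * z ^ (2*k) := by
    refine Finset.sum_le_sum fun k hk => mul_le_mul_of_nonneg_right (hm k hk h) ?_
    rw [pow_mul]; positivity
  linarith

section
variable {N : ℕ} {Q : ℕ → ℝ → ℝ} {z₁ z₂ : ℝ → ℝ} {B₁ B₂ s₁ s₂ : ℝ}

lemma Arc.shift_der (h : Arc N Q z₁ B₁ s₁) (c l : ℝ) (hl : l < B₁ + c) :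
    HasDerivAt (fun l => z₁ (l - c)) (Vz N Q (l - c) (z₁ (l - c))) l :=
  (h.der (l - c) (by linarith)).comp_sub_const l c

lemma Arc.shift_lim (h : Arc N Q z₁ B₁ s₁) (c : ℝ) :
    Tendsto (fun l => z₁ (l - c)) (𝓝[<] (B₁ + c)) (𝓝 0) := by
  refine h.lim.comp ?_
  refine tendsto_nhdsWithin_iff.2 ⟨?_, ?_⟩
  · have : Tendsto (fun l : ℝ => l - c) (𝓝 (B₁ + c)) (𝓝 (B₁ + c - c)) :=
      (continuous_id.sub continuous_const).tendsto _
    rw [add_sub_cancel_right] at this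
    exact this.mono_left nhdsWithin_le_nhds
  · filter_upwards [self_mem_nhdsWithin] with l hl
    simp only [mem_Iio] at hl ⊢; linarith

lemma Arc.shift_ini (h : Arc N Q z₁ B₁ s₁) (c : ℝ) :
    Tendsto (fun l => Real.exp l * z₁ (l - c)) atBot (𝓝 (Real.exp c * s₁)) := by
  have h1 : Tendsto (fun l : ℝ => l - c) atBot atBot := tendsto_atBot_add_const_right _ (-c) tendsto_id
  have := (h.ini.comp h1).const_mul (Real.exp c)
  refine this.congr fun l => ?_
  simp only [Function.comp]
  rw [← mul_assoc, ← Real.exp_add]; congr 2; ring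

/-- upper comparison -/
lemma cmp1 (hQ : ∀ k ∈ Finset.range (N+1), Continuous (Q k))
    (hm : ∀ k ∈ Finset.range (N+1), Monotone (Q k))
    (h1 : Arc N Q z₁ B₁ s₁) (h2 : Arc N Q z₂ B₂ s₂) {c : ℝ} (hc : 0 ≤ c) {l₀ : ℝ}
    (hl1 : l₀ < B₁ + c) (hl2 : l₀ < B₂) (h0 : z₂ l₀ < z₁ (l₀ - c)) :
    B₂ ≤ B₁ + c ∧ ∀ l, l₀ ≤ l → l < B₁ + c → l < B₂ → z₂ l < z₁ (l - c) := by
  have key : ∀ l, l₀ ≤ l → l < B₁ + c → l < B₂ → z₂ l < z₁ (l - c) := by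
    intro l hl hlB1 hlB2
    refine (cmp_core hQ hl (p := fun l => z₁ (l - c)) (q := z₂)
      (p' := fun l => Vz N Q (l - c) (z₁ (l - c))) ?_ ?_ ?_ ?_).1 ?_ h0
    · exact fun m hm => h1.pos _ (by linarith [hm.2])
    · exact fun m hm => h2.pos _ (by linarith [hm.2])
    · exact fun m hm => h1.shift_der c m (by linarith [hm.2])
    · exact fun m hm => h2.der _ (by linarith [hm.2])
    · exact fun m _ => Vz_mono hm (by linarith)
  refine ⟨?_, key⟩
  by_contra hcon
  push Not at hcon
  have hp := h2.pos _ hcon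
  have t2 : Tendsto z₂ (𝓝[<] (B₁ + c)) (𝓝 (z₂ (B₁ + c))) :=
    (h2.der _ hcon).continuousAt.tendsto.mono_left nhdsWithin_le_nhds
  have : z₂ (B₁ + c) ≤ 0 := by
    refine le_of_tendsto_of_tendsto t2 (h1.shift_lim c) ?_
    filter_upwards [Ioo_mem_nhdsLT hl1] with l hl
    exact (key l hl.1.le hl.2 (hl.2.trans hcon)).le
  linarith

lemma ini_lt (h1 : Arc N Q z₁ B₁ s₁) (h2 : Arc N Q z₂ B₂ s₂) {c : ℝ}
    (h : s₂ < Real.exp c * s₁) : ∀ᶠ l in atBot, z₂ l < z₁ (l - c) := by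
  filter_upwards [h2.ini.eventually_lt (h1.shift_ini c) h] with l hl
  exact lt_of_mul_lt_mul_left hl (Real.exp_pos _).le

lemma cmp1_lt (hQ : ∀ k ∈ Finset.range (N+1), Continuous (Q k))
    (hm : ∀ k ∈ Finset.range (N+1), Monotone (Q k))
    (h1 : Arc N Q z₁ B₁ s₁) (h2 : Arc N Q z₂ B₂ s₂) {c : ℝ} (hc : 0 ≤ c)
    (h : s₂ < Real.exp c * s₁) :
    B₂ ≤ B₁ + c ∧ ∀ l, l < B₁ + c → l < B₂ → z₂ l < z₁ (l - c) := by
  have e := ini_lt h1 h2 h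
  constructor
  · obtain ⟨l, hl, hl1, hl2⟩ := (e.and ((eventually_lt_atBot (B₁ + c)).and (eventually_lt_atBot B₂))).exists
    exact (cmp1 hQ hm h1 h2 hc hl1 hl2 hl).1
  · intro l hl1 hl2
    obtain ⟨m, hm', hml⟩ := (e.and (eventually_le_atBot l)).exists
    exact (cmp1 hQ hm h1 h2 hc (hml.trans_lt hl1) (hml.trans_lt hl2) hm').2 l hml hl1 hl2

lemma cmp1_le (hQ : ∀ k ∈ Finset.range (N+1), Continuous (Q k))
    (hm : ∀ k ∈ Finset.range (N+1), Monotone (Q k))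
    (h1 : Arc N Q z₁ B₁ s₁) (h2 : Arc N Q z₂ B₂ s₂) {c : ℝ} (hc : 0 ≤ c)
    (h : s₂ ≤ Real.exp c * s₁) : B₂ ≤ B₁ + c ∧ ∀ l, l < B₂ → z₂ l ≤ z₁ (l - c) := by
  have hlt : ∀ c' > c, s₂ < Real.exp c' * s₁ := fun c' hc' =>
    h.trans_lt (mul_lt_mul_of_pos_right (Real.exp_lt_exp.2 hc') h1.spos)
  have hB : B₂ ≤ B₁ + c := by
    refine le_of_forall_pos_le_add fun e he => ?_
    have := (cmp1_lt hQ hm h1 h2 (c := c + e) (by linarith) (hlt _ (by linarith))).1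
    linarith
  refine ⟨hB, fun l hl => ?_⟩
  have hl1 : l - c < B₁ := by linarith
  have t : Tendsto (fun c' => z₁ (l - c')) (𝓝[>] c) (𝓝 (z₁ (l - c))) := by
    have h3 : ContinuousAt (fun c' => z₁ (l - c')) c :=
      ContinuousAt.comp (f := fun c' => l - c') (h1.der _ hl1).continuousAt (by fun_prop)
    exact h3.tendsto.mono_left nhdsWithin_le_nhds
  refine ge_of_tendsto t ?_
  filter_upwards [self_mem_nhdsWithin] with c' hc'
  have hc'' : c < c' := hc'
  exact ((cmp1_lt hQ hm h1 h2 (by linarith) (hlt c' hc')).2 l (by linarith) hl).le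

lemma cmp1_strict (hQ : ∀ k ∈ Finset.range (N+1), Continuous (Q k))
    (hm : ∀ k ∈ Finset.range (N+1), Monotone (Q k))
    (hs : ∀ B : ℝ, ∃ k ∈ Finset.range (N+1), ∃ l l', l < l' ∧ l' < B ∧ Q k l < Q k l')
    (h1 : Arc N Q z₁ B₁ s₁) (h2 : Arc N Q z₂ B₂ s₂) {c : ℝ} (hc : 0 < c)
    (h : s₂ ≤ Real.exp c * s₁) : ∃ c', 0 ≤ c' ∧ c' < c ∧ B₂ ≤ B₁ + c' := by
  obtain ⟨hB, hle⟩ := cmp1_le hQ hm h1 h2 hc.le h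
  by_cases hex : ∃ l < B₂, z₂ l < z₁ (l - c)
  · obtain ⟨l, hl, hlt⟩ := hex
    have hl1 : l - c < B₁ := by linarith
    have h3 : ContinuousAt (fun c' => z₁ (l - c')) c :=
      ContinuousAt.comp (f := fun c' => l - c') (h1.der _ hl1).continuousAt (by fun_prop)
    have e1 : ∀ᶠ c' in 𝓝[<] c, z₂ l < z₁ (l - c') :=
      (h3.tendsto.mono_left nhdsWithin_le_nhds).eventually (lt_mem_nhds hlt)
    have e2 : ∀ᶠ c' in 𝓝[<] c, c' ∈ Ioo (max 0 (l - B₁)) c :=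
      Ioo_mem_nhdsLT (max_lt hc (by linarith))
    obtain ⟨c', hc1, hc2⟩ := (e1.and e2).exists
    have h0 : 0 < c' := (le_max_left _ _).trans_lt hc2.1
    have h0' : l - B₁ < c' := (le_max_right _ _).trans_lt hc2.1
    exact ⟨c', h0.le, hc2.2, (cmp1 hQ hm h1 h2 h0.le (by linarith) hl hc1).1⟩
  · exfalso
    push Not at hex
    have heq : ∀ l < B₂, z₂ l = z₁ (l - c) := fun l hl => le_antisymm (hle l hl) (hex l hl)
    have hV : ∀ l < B₂, Vz N Q l (z₂ l) = Vz N Q (l - c) (z₂ l) := by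
      intro l hl
      have d1 := h2.der l hl
      have d2 := h1.shift_der c l (by linarith)
      have : z₂ =ᶠ[𝓝 l] fun l => z₁ (l - c) := by
        filter_upwards [Iio_mem_nhds hl] with m hm using heq m hm
      have := (d2.congr_of_eventuallyEq this).unique d1
      rw [← this, heq l hl]
    have hQe : ∀ l < B₂, ∀ k ∈ Finset.range (N+1), Q k (l - c) = Q k l := by
      intro l hl
      have := hV l hl
      unfold Vz at this
      have hsum : ∑ k ∈ Finset.range (N+1), Q k (l - c) * z₂ l ^ (2*k) =
        ∑ k ∈ Finset.range (N+1), Q k l * z₂ l ^ (2*k) := by linarith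
      have hp := h2.pos l hl
      rw [Finset.sum_eq_sum_iff_of_le] at hsum
      · exact fun k hk => mul_right_cancel₀ (pow_pos hp _).ne' (hsum k hk)
      · exact fun k hk => mul_le_mul_of_nonneg_right (hm k hk (by linarith)) (pow_pos hp _).le
    have hQn : ∀ n : ℕ, ∀ l < B₂, ∀ k ∈ Finset.range (N+1), Q k (l - n * c) = Q k l := by
      intro n
      induction n with
      | zero => intro l _ k _; simp
      | succ n ih =>
        intro l hl k hk
        have h5 : (0:ℝ) ≤ n * c := by positivity
        rw [← ih l hl k hk, ← hQe (l - n * c) (by linarith) k hk]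
        congr 1; push_cast; ring
    obtain ⟨k, hk, l, l', hll, hlB, hlt⟩ := hs B₂
    obtain ⟨n, hn⟩ := exists_nat_ge ((l' - l) / c)
    rw [div_le_iff₀ hc] at hn
    have h6 := hQn n l' hlB k hk
    have h7 := hm k hk (show l' - n * c ≤ l by linarith)
    linarith

/-- lower comparison -/
lemma cmp2_lt (hQ : ∀ k ∈ Finset.range (N+1), Continuous (Q k))
    (hm : ∀ k ∈ Finset.range (N+1), Antitone (Q k))
    (h1 : Arc N Q z₁ B₁ s₁) (h2 : Arc N Q z₂ B₂ s₂) {c : ℝ} (hc : 0 ≤ c)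
    (h : B₂ < B₁ + c) : s₂ ≤ Real.exp c * s₁ := by
  have hz : 0 < z₁ (B₂ - c) := h1.pos _ (by linarith)
  have t1 : Tendsto (fun l => z₁ (l - c)) (𝓝[<] B₂) (𝓝 (z₁ (B₂ - c))) :=
    (h1.shift_der c B₂ h).continuousAt.tendsto.mono_left nhdsWithin_le_nhds
  have e := h2.lim.eventually_lt t1 hz
  have key : ∀ l < B₂, z₂ l < z₁ (l - c) := by
    intro l hl
    obtain ⟨m, hm1, hm2⟩ := (e.and (Ioo_mem_nhdsLT hl)).exists
    refine (cmp_core hQ hm2.1.le (p := fun l => z₁ (l - c)) (q := z₂)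
      (p' := fun l => Vz N Q (l - c) (z₁ (l - c))) ?_ ?_ ?_ ?_).2 ?_ hm1
    · exact fun m hm => h1.pos _ (by linarith [hm.2, hm2.2])
    · exact fun m hm => h2.pos _ (by linarith [hm.2, hm2.2])
    · exact fun m hm => h1.shift_der c m (by linarith [hm.2, hm2.2])
    · exact fun m hm => h2.der _ (by linarith [hm.2, hm2.2])
    · exact fun m _ => Vz_anti hm (by linarith)
  refine le_of_tendsto_of_tendsto h2.ini (h1.shift_ini c) ?_
  filter_upwards [eventually_lt_atBot B₂] with l hl
  exact mul_le_mul_of_nonneg_left (key l hl).le (Real.exp_pos _).le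

lemma cmp2_le (hQ : ∀ k ∈ Finset.range (N+1), Continuous (Q k))
    (hm : ∀ k ∈ Finset.range (N+1), Antitone (Q k))
    (h1 : Arc N Q z₁ B₁ s₁) (h2 : Arc N Q z₂ B₂ s₂) {c : ℝ} (hc : 0 ≤ c)
    (h : B₂ ≤ B₁ + c) : s₂ ≤ Real.exp c * s₁ := by
  have t : Tendsto (fun c' => Real.exp c' * s₁) (𝓝[>] c) (𝓝 (Real.exp c * s₁)) := by
    have : Continuous (fun c' => Real.exp c' * s₁) := by fun_prop
    exact (this.tendsto c).mono_left nhdsWithin_le_nhds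
  refine ge_of_tendsto t ?_
  filter_upwards [self_mem_nhdsWithin] with c' hc'
  have hc'' : c < c' := hc'
  exact cmp2_lt hQ hm h1 h2 (by linarith) (by linarith)
end

/-- the half-map relation -/
def Half (N : ℕ) (Q : ℕ → ℝ → ℝ) (s s' : ℝ) : Prop :=
  ∃ B z w, Arc N Q z B s ∧ Arc N (fun k l => - Q k l) w B s'

structure GoodQ (N : ℕ) (Q : ℕ → ℝ → ℝ) : Prop where
  cont : ∀ k ∈ Finset.range (N+1), Continuous (Q k)
  mono : ∀ k ∈ Finset.range (N+1), Monotone (Q k)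

def StrictQ (N : ℕ) (Q : ℕ → ℝ → ℝ) : Prop :=
  ∀ B : ℝ, ∃ k ∈ Finset.range (N+1), ∃ l l', l < l' ∧ l' < B ∧ Q k l < Q k l'

lemma Half.pos {N Q s s'} (h : Half N Q s s') : 0 < s ∧ 0 < s' := by
  obtain ⟨B, z, w, h1, h2⟩ := h
  exact ⟨h1.spos, h2.spos⟩

lemma Half.le {N Q s₁ s₁' s₂ s₂' r} (hQ : GoodQ N Q) (h1 : Half N Q s₁ s₁') (h2 : Half N Q s₂ s₂')
    (hr : 1 ≤ r) (h : s₂ ≤ r * s₁) : s₂' ≤ r * s₁' := by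
  obtain ⟨B₁, z₁, w₁, hz1, hw1⟩ := h1
  obtain ⟨B₂, z₂, w₂, hz2, hw2⟩ := h2
  have hc : 0 ≤ Real.log r := Real.log_nonneg hr
  have he : Real.exp (Real.log r) = r := Real.exp_log (by linarith)
  have hB := (cmp1_le hQ.cont hQ.mono hz1 hz2 hc (by rwa [he])).1
  have := cmp2_le (fun k hk => (hQ.cont k hk).neg) (fun k hk => (hQ.mono k hk).neg) hw1 hw2 hc hB
  rwa [he] at this

lemma Half.lt {N Q s₁ s₁' s₂ s₂' r} (hQ : GoodQ N Q) (hS : StrictQ N Q)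
    (h1 : Half N Q s₁ s₁') (h2 : Half N Q s₂ s₂')
    (hr : 1 < r) (h : s₂ ≤ r * s₁) : ∃ r', 1 ≤ r' ∧ r' < r ∧ s₂' ≤ r' * s₁' := by
  obtain ⟨B₁, z₁, w₁, hz1, hw1⟩ := h1
  obtain ⟨B₂, z₂, w₂, hz2, hw2⟩ := h2
  have hc : 0 < Real.log r := Real.log_pos hr
  have he : Real.exp (Real.log r) = r := Real.exp_log (by linarith)
  obtain ⟨c', h0, hlt, hB⟩ := cmp1_strict hQ.cont hQ.mono hS hz1 hz2 hc (by rwa [he])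
  refine ⟨Real.exp c', Real.one_le_exp h0, ?_, ?_⟩
  · rw [← he]; exact Real.exp_lt_exp.2 hlt
  · exact cmp2_le (fun k hk => (hQ.cont k hk).neg) (fun k hk => (hQ.mono k hk).neg) hw1 hw2 h0 hB


lemma fixed_attr (P : ℝ → ℝ) (hpos : ∀ s, 0 < s → 0 < P s)
    (hle : ∀ s s' r, 0 < s → 0 < s' → 1 ≤ r → s' ≤ r * s → P s' ≤ r * P s)
    (hlt : ∀ s s' r, 0 < s → 0 < s' → 1 < r → s' ≤ r * s → P s' < r * P s)
    (e₁ e₂ : ℝ) (he1 : 0 < e₁) (h1 : ∀ s, 0 < s → s ≤ e₁ → s ≤ P s)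
    (h2 : ∀ s, 0 < s → e₂ ≤ s → P s ≤ s) :
    ∃ S, 0 < S ∧ P S = S ∧
      ∀ u : ℕ → ℝ, 0 < u 0 → (∀ n, u (n+1) = P (u n)) → Tendsto u atTop (𝓝 S) := by
  have hmono : ∀ s s', 0 < s → s ≤ s' → P s ≤ P s' := fun s s' hs h => by
    simpa using hle s' s 1 (by linarith) hs le_rfl (by linarith)
  set A : Set ℝ := {s | 0 < s ∧ s < P s} with hA
  have hne : e₁ / 2 ∈ A := by
    refine ⟨by linarith, ?_⟩
    have := hlt (e₁/2) e₁ 2 (by linarith) he1 (by norm_num) (by linarith)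
    have := h1 e₁ he1 le_rfl
    linarith
  have hbd : BddAbove A := ⟨e₂, fun s hs => by
    by_contra hc
    push Not at hc
    linarith [h2 s hs.1 hc.le, hs.2]⟩
  set S := sSup A with hS
  have hS0 : e₁ / 2 ≤ S := le_csSup hbd hne
  have hSp : 0 < S := by linarith
  have hbelow : ∀ s, 0 < s → s < S → s < P s := by
    intro s hs hsS
    obtain ⟨s', hs', hss⟩ := exists_lt_of_lt_csSup ⟨_, hne⟩ hsS
    have hr : 1 < s' / s := by rwa [one_lt_div hs]
    have := hlt s s' (s'/s) hs hs'.1 hr (by field_simp; exact le_rfl)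
    have h3 := hs'.2.trans this
    rw [div_mul_eq_mul_div, lt_div_iff₀ hs] at h3
    exact lt_of_mul_lt_mul_left h3 hs'.1.le
  have hfix : P S = S := by
    apply le_antisymm
    · refine le_of_forall_gt_imp_ge_of_dense fun s hs => ?_
      have h4 : P s ≤ s := by
        by_contra hc
        push Not at hc
        exact absurd (le_csSup hbd (show s ∈ A from ⟨by linarith, hc⟩)) (by linarith)
      exact (hmono S s hSp hs.le).trans h4
    · refine le_of_forall_lt_imp_le_of_dense fun s hs => ?_
      rcases le_or_gt s 0 with h0 | h0
      · linarith [hpos S hSp]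
      · exact (hbelow s h0 hs).le.trans (hmono s S h0 hs.le)
  have habove : ∀ s, S < s → P s < s := by
    intro s hs
    have hr : 1 < s / S := by rwa [one_lt_div hSp]
    have := hlt S s (s/S) hSp (by linarith) hr (by field_simp; exact le_rfl)
    rw [hfix] at this
    rwa [div_mul_cancel₀ _ hSp.ne'] at this
  refine ⟨S, hSp, hfix, fun u hu0 hu => ?_⟩
  have hup : ∀ n, 0 < u n := fun n => by
    induction n with
    | zero => exact hu0
    | succ n ih => rw [hu]; exact hpos _ ih
  rcases le_total (u 0) S with hc | hc
  · have hb : ∀ n, u n ≤ S := fun n => by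
      induction n with
      | zero => exact hc
      | succ n ih => rw [hu, ← hfix]; exact hmono _ _ (hup n) ih
    have hm : Monotone u := monotone_nat_of_le_succ fun n => by
      rw [hu]
      rcases (hb n).lt_or_eq with h | h
      · exact (hbelow _ (hup n) h).le
      · rw [h, hfix]
    obtain ⟨L, hL⟩ : ∃ L, Tendsto u atTop (𝓝 L) :=
      ⟨_, tendsto_atTop_ciSup hm ⟨S, by rintro _ ⟨n, rfl⟩; exact hb n⟩⟩
    have hLS : L ≤ S := le_of_tendsto' hL hb
    have huL : ∀ n, u n ≤ L := fun n => hm.ge_of_tendsto hL n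
    have hLp : 0 < L := hu0.trans_le (huL 0)
    rcases hLS.lt_or_eq with h | h
    · exfalso
      have h5 := hbelow L hLp h
      have t : Tendsto (fun n => L / u n * u (n+1)) atTop (𝓝 (L / L * L)) :=
        (tendsto_const_nhds.div hL hLp.ne').mul (hL.comp (tendsto_add_atTop_nat 1))
      have : P L ≤ L / L * L := ge_of_tendsto' t fun n => by
        rw [hu]
        refine hle _ _ _ (hup n) hLp ?_ ?_
        · rw [one_le_div (hup n)]; exact huL n
        · have := hup n
          field_simp; exact le_rfl
      rw [div_self hLp.ne', one_mul] at this
      linarith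
    · rwa [h] at hL
  · have hb : ∀ n, S ≤ u n := fun n => by
      induction n with
      | zero => exact hc
      | succ n ih => rw [hu, ← hfix]; exact hmono _ _ hSp ih
    have hm : Antitone u := antitone_nat_of_succ_le fun n => by
      rw [hu]
      rcases (hb n).lt_or_eq with h | h
      · exact (habove _ h).le
      · rw [← h, hfix]
    obtain ⟨L, hL⟩ : ∃ L, Tendsto u atTop (𝓝 L) :=
      ⟨_, tendsto_atTop_ciInf hm ⟨S, by rintro _ ⟨n, rfl⟩; exact hb n⟩⟩
    have hLS : S ≤ L := ge_of_tendsto' hL hb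
    have huL : ∀ n, L ≤ u n := fun n => hm.le_of_tendsto hL n
    have hLp : 0 < L := hSp.trans_le hLS
    rcases hLS.lt_or_eq with h | h
    · exfalso
      have h5 := habove L h
      have t : Tendsto (fun n => u n / L * P L) atTop (𝓝 (L / L * P L)) :=
        (hL.div_const L).mul tendsto_const_nhds
      have : L ≤ L / L * P L := ge_of_tendsto' t fun n => by
        refine (huL (n+1)).trans ?_
        rw [hu]
        refine hle _ _ _ hLp (hup n) ?_ ?_
        · rw [one_le_div hLp]; exact huL n
        · field_simp; exact le_rfl
      rw [div_self hLp.ne', one_mul] at this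
      linarith
    · rwa [← h] at hL


structure GHyp (g : ℝ → ℝ) : Prop where
  cd : ContDiff ℝ 1 g
  d0 : 0 < deriv g 0
  sign : ∀ x : ℝ, x ≠ 0 → 0 < x * g x
  top : Tendsto (Gfun g) atTop atTop
  bot : Tendsto (Gfun g) atBot atTop

section
variable {g : ℝ → ℝ}

lemma GHyp.gpos (h : GHyp g) {x : ℝ} (hx : 0 < x) : 0 < g x :=
  (pos_iff_pos_of_mul_pos (h.sign x hx.ne')).1 hx

lemma GHyp.gneg (h : GHyp g) {x : ℝ} (hx : x < 0) : g x < 0 := by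
  have := h.sign x hx.ne
  nlinarith

lemma GHyp.gzero (h : GHyp g) : g 0 = 0 := by
  have hc : Continuous g := h.cd.continuous
  apply le_antisymm
  · refine le_of_tendsto (hc.continuousWithinAt (s := Iio 0) (x := 0)).tendsto ?_
    filter_upwards [self_mem_nhdsWithin] with x hx using (h.gneg hx).le
  · refine ge_of_tendsto (hc.continuousWithinAt (s := Ioi 0) (x := 0)).tendsto ?_
    filter_upwards [self_mem_nhdsWithin] with x hx using (h.gpos hx).le

lemma GHyp.G_der (h : GHyp g) (x : ℝ) : HasDerivAt (Gfun g) (g x) x :=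
  (h.cd.continuous.integral_hasStrictDerivAt 0 x).hasDerivAt

lemma GHyp.G_cont (h : GHyp g) : Continuous (Gfun g) :=
  continuous_iff_continuousAt.2 fun x => (h.G_der x).continuousAt

lemma Gfun_zero : Gfun g 0 = 0 := by simp [Gfun]

lemma GHyp.G_mono (h : GHyp g) : StrictMonoOn (Gfun g) (Ici 0) := by
  apply strictMonoOn_of_deriv_pos (convex_Ici 0) h.G_cont.continuousOn
  intro x hx
  rw [interior_Ici] at hx
  rw [(h.G_der x).deriv]; exact h.gpos hx

lemma GHyp.G_anti (h : GHyp g) : StrictAntiOn (Gfun g) (Iic 0) := by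
  apply strictAntiOn_of_deriv_neg (convex_Iic 0) h.G_cont.continuousOn
  intro x hx
  rw [interior_Iic] at hx
  rw [(h.G_der x).deriv]; exact h.gneg hx

lemma GHyp.G_pos (h : GHyp g) {x : ℝ} (hx : x ≠ 0) : 0 < Gfun g x := by
  rw [← Gfun_zero (g := g)]
  rcases hx.lt_or_gt with hx | hx
  · exact h.G_anti hx.le (mem_Iic.2 le_rfl) hx
  · exact h.G_mono (mem_Ici.2 le_rfl) hx.le hx

lemma GHyp.G_nonneg (h : GHyp g) (x : ℝ) : 0 ≤ Gfun g x := by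
  by_cases hx : x = 0
  · rw [hx, Gfun_zero]
  · exact (h.G_pos hx).le

lemma GHyp.X_ex (h : GHyp g) (l : ℝ) : ∃ x, 0 < x ∧ 2 * Gfun g x = Real.exp l ^ 2 := by
  obtain ⟨b, hb, hb0⟩ := ((h.top.eventually_ge_atTop (Real.exp l ^ 2)).and (eventually_gt_atTop 0)).exists
  have := intermediate_value_Icc hb0.le (h.G_cont.continuousOn (s := Icc 0 b))
  rw [Gfun_zero] at this
  have hp := Real.exp_pos l
  obtain ⟨x, hx, hxe⟩ := this (show Real.exp l ^ 2 / 2 ∈ _ from ⟨by positivity, by nlinarith⟩)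
  refine ⟨x, hx.1.lt_of_ne ?_, by rw [hxe]; ring⟩
  rintro rfl
  rw [Gfun_zero] at hxe
  have : 0 < Real.exp l ^ 2 / 2 := by positivity
  linarith

/-- inverse of the log-radius -/
def Xf (g : ℝ → ℝ) (l : ℝ) : ℝ :=
  Classical.epsilon fun x => 0 < x ∧ 2 * Gfun g x = Real.exp l ^ 2

def Lf (g : ℝ → ℝ) (x : ℝ) : ℝ := Real.log (2 * Gfun g x) / 2

lemma GHyp.X_spec (h : GHyp g) (l : ℝ) : 0 < Xf g l ∧ 2 * Gfun g (Xf g l) = Real.exp l ^ 2 :=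
  Classical.epsilon_spec (h.X_ex l)

lemma GHyp.L_spec (h : GHyp g) {x : ℝ} (hx : 0 < x) : Real.exp (Lf g x) ^ 2 = 2 * Gfun g x := by
  rw [← Real.exp_nat_mul, Lf]
  push_cast
  rw [mul_div_cancel₀ _ (by norm_num : (2:ℝ) ≠ 0), Real.exp_log]
  linarith [h.G_pos hx.ne']

lemma GHyp.XL (h : GHyp g) {x : ℝ} (hx : 0 < x) : Xf g (Lf g x) = x := by
  have := h.X_spec (Lf g x)
  refine h.G_mono.injOn this.1.le hx.le ?_
  linarith [this.2, h.L_spec hx]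

lemma GHyp.LX (h : GHyp g) (l : ℝ) : Lf g (Xf g l) = l := by
  rw [Lf, (h.X_spec l).2, Real.log_pow, Real.log_exp]; push_cast; ring

lemma GHyp.L_mono (h : GHyp g) : StrictMonoOn (Lf g) (Ioi 0) := by
  intro x hx y hy hxy
  have hx' : 0 < x := hx
  have hy' : 0 < y := hy
  have := h.G_mono hx'.le hy'.le hxy
  have := Real.log_lt_log (x := 2 * Gfun g x) (y := 2 * Gfun g y) (by linarith [h.G_pos hx'.ne']) (by linarith)
  unfold Lf; linarith
end

lemma inv_strict {f θ : ℝ → ℝ} {I J : Set ℝ} (hθ : MapsTo θ I J)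
    (h1 : ∀ l ∈ I, f (θ l) = l) (mono : StrictMonoOn f J) : StrictMonoOn θ I := by
  intro l hl m hm hlm
  by_contra hc
  push Not at hc
  have := mono.monotoneOn (hθ hm) (hθ hl) hc
  rw [h1 l hl, h1 m hm] at this
  linarith

lemma inv_cont {f θ : ℝ → ℝ} {I J : Set ℝ} (hI : IsOpen I) (hJ : IsOpen J) (hθ : MapsTo θ I J)
    (hf : MapsTo f J I) (h1 : ∀ l ∈ I, f (θ l) = l) (h2 : ∀ t ∈ J, θ (f t) = t)
    (mono : StrictMonoOn f J) {l : ℝ} (hl : l ∈ I) : ContinuousAt θ l := by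
  refine (inv_strict hθ h1 mono).continuousAt_of_image_mem_nhds (hI.mem_nhds hl) ?_
  refine mem_of_superset (hJ.mem_nhds (hθ hl)) fun t ht => ⟨f t, hf ht, h2 t ht⟩

section
variable {g : ℝ → ℝ}

lemma GHyp.L_der (h : GHyp g) {x : ℝ} (hx : 0 < x) :
    HasDerivAt (Lf g) (g x / (2 * Gfun g x)) x := by
  have hp := h.G_pos hx.ne'
  have := (((h.G_der x).const_mul 2).log (by positivity)).div_const 2
  refine this.congr_deriv ?_
  field_simp

lemma GHyp.X_strict (h : GHyp g) : StrictMono (Xf g) := by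
  rw [← strictMonoOn_univ]
  exact inv_strict (J := Ioi 0) (fun l _ => (h.X_spec l).1) (fun l _ => h.LX l) h.L_mono

lemma GHyp.X_der (h : GHyp g) (l : ℝ) : HasDerivAt (Xf g) (Real.exp l ^ 2 / g (Xf g l)) l := by
  have hX := h.X_spec l
  have hg := h.gpos hX.1
  have hc : ContinuousAt (Xf g) l := inv_cont (J := Ioi 0) isOpen_univ isOpen_Ioi
    (fun l _ => (h.X_spec l).1) (fun _ _ => mem_univ _) (fun l _ => h.LX l)
    (fun t ht => h.XL ht) h.L_mono (mem_univ l)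
  have := HasDerivAt.of_local_left_inverse hc (h.L_der hX.1)
    (by rw [hX.2]; positivity) (Eventually.of_forall h.LX)
  refine this.congr_deriv ?_
  rw [inv_div, hX.2]

lemma GHyp.X_cont (h : GHyp g) : Continuous (Xf g) :=
  continuous_iff_continuousAt.2 fun x => (h.X_der x).continuousAt

def Qf (g : ℝ → ℝ) (o : ℕ → ℝ → ℝ) (k : ℕ) (l : ℝ) : ℝ :=
  o k (Xf g l) * Real.exp l ^ (2*k+1) / g (Xf g l)

lemma GHyp.Q_der (h : GHyp g) {o : ℕ → ℝ → ℝ} {k : ℕ} (ho : ContDiff ℝ 1 (o k)) (l : ℝ) :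
    HasDerivAt (Qf g o k) (Real.exp l ^ (2*k+1) / (g (Xf g l) ^ 2 * Xf g l) *
      HgLHS g k (o k) (Xf g l)) l := by
  have hX := h.X_spec l
  have hg := h.gpos hX.1
  have dX := h.X_der l
  have d1 := (ho.differentiable one_ne_zero (Xf g l)).hasDerivAt.comp l dX
  have d2 := (h.cd.differentiable one_ne_zero (Xf g l)).hasDerivAt.comp l dX
  have d3 := (Real.hasDerivAt_exp l).pow (2*k+1)
  have := (d1.mul d3).div d2 hg.ne'
  refine this.congr_deriv ?_
  simp only [HgLHS, Function.comp, Pi.mul_apply, Pi.pow_apply, hX.2]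
  have hx0 := hX.1.ne'
  have hg0 := hg.ne'
  simp only [Nat.add_sub_cancel]
  field_simp
  push_cast
  ring

lemma goodQ (h : GHyp g) {N : ℕ} {o : ℕ → ℝ → ℝ}
    (ho : ∀ k ∈ Finset.range (N + 1), ContDiff ℝ 1 (o k))
    (hH : ∀ k ∈ Finset.range (N + 1), ∀ x : ℝ, x ≠ 0 → 0 ≤ HgLHS g k (o k) x) :
    GoodQ N (Qf g o) := by
  refine ⟨fun k hk => continuous_iff_continuousAt.2 fun l => (h.Q_der (ho k hk) l).continuousAt,
    fun k hk => monotone_of_deriv_nonneg (fun l => (h.Q_der (ho k hk) l).differentiableAt) fun l => ?_⟩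
  rw [(h.Q_der (ho k hk) l).deriv]
  have hX := h.X_spec l
  have hg := h.gpos hX.1
  have := hH k hk _ hX.1.ne'
  have := hX.1
  positivity

lemma strictQ (h : GHyp g) {N : ℕ} {o : ℕ → ℝ → ℝ}
    (ho : ∀ k ∈ Finset.range (N + 1), ContDiff ℝ 1 (o k))
    (hs : ∀ δ > 0, ∃ x, 0 < x ∧ x < δ ∧ ∃ k ∈ Finset.range (N+1), 0 < HgLHS g k (o k) x) :
    StrictQ N (Qf g o) := by
  intro B
  obtain ⟨x, hx, hxB, k, hk, hpos⟩ := hs (Xf g B) (h.X_spec B).1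
  have d := h.Q_der (ho k hk) (Lf g x)
  rw [h.XL hx] at d
  have hg := h.gpos hx
  have hd : 0 < Real.exp (Lf g x) ^ (2*k+1) / (g x ^ 2 * x) * HgLHS g k (o k) x := by positivity
  have hlB : Lf g x < B := by
    rw [← h.LX B]; exact h.L_mono hx (h.X_spec B).1 hxB
  have e := ((hasDerivAt_iff_tendsto_slope.1 d).mono_left
    (nhdsWithin_mono _ (show Ioi (Lf g x) ⊆ {Lf g x}ᶜ from fun y hy => ne_of_gt hy))).eventually (lt_mem_nhds hd)
  obtain ⟨m, hm1, hm2⟩ := (e.and (Ioo_mem_nhdsGT hlB)).exists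
  refine ⟨k, hk, Lf g x, m, hm2.1, hm2.2, ?_⟩
  rw [slope_def_field] at hm1
  have h3 : 0 < m - Lf g x := by linarith [hm2.1]
  have := (div_pos_iff_of_pos_right h3).1 hm1
  linarith
end

lemma arc_of_sol {g : ℝ → ℝ} (hg : GHyp g) {N : ℕ} {o : ℕ → ℝ → ℝ} {x y : ℝ → ℝ} {a b : ℝ}
    (hab : a < b) (hx : ∀ t ∈ Icc a b, HasDerivAt x (y t) t)
    (hy : ∀ t ∈ Icc a b, HasDerivAt y
      (-g (x t) - ∑ k ∈ Finset.range (N + 1), o k (x t) * y t ^ (2 * k + 1)) t)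
    (hxa : x a = 0) (hpos : ∀ t ∈ Ico a b, 0 < y t) (hyb : y b = 0) :
    0 < x b ∧ ∃ z, Arc N (Qf g o) z (Lf g (x b)) (y a) := by
  have cx : ContinuousOn x (Icc a b) := fun t ht => (hx t ht).continuousAt.continuousWithinAt
  have sx : StrictMonoOn x (Icc a b) := by
    apply strictMonoOn_of_deriv_pos (convex_Icc a b) cx
    intro t ht
    rw [interior_Icc] at ht
    rw [(hx t (Ioo_subset_Icc_self ht)).deriv]
    exact hpos t (Ioo_subset_Ico_self ht)
  have ha : a ∈ Icc a b := left_mem_Icc.2 hab.le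
  have hb : b ∈ Icc a b := right_mem_Icc.2 hab.le
  have hxb : 0 < x b := by rw [← hxa]; exact sx ha hb hab
  refine ⟨hxb, ?_⟩
  -- inverse of x
  have hex : ∀ p ∈ Ioo 0 (x b), ∃ t, t ∈ Ioo a b ∧ x t = p := by
    intro p hp
    have := intermediate_value_Ioo hab.le cx
    rw [hxa] at this
    exact this hp
  choose! θ hθ hθx using hex
  have mx : MapsTo x (Ioo a b) (Ioo 0 (x b)) := fun t ht => by
    constructor
    · rw [← hxa]; exact sx ha (Ioo_subset_Icc_self ht) ht.1
    · exact sx (Ioo_subset_Icc_self ht) hb ht.2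
  have hθ2 : ∀ t ∈ Ioo a b, θ (x t) = t := fun t ht =>
    sx.injOn (Ioo_subset_Icc_self (hθ _ (mx ht))) (Ioo_subset_Icc_self ht) (hθx _ (mx ht))
  have sx' : StrictMonoOn x (Ioo a b) := sx.mono Ioo_subset_Icc_self
  have sθ : StrictMonoOn θ (Ioo 0 (x b)) := inv_strict hθ hθx sx'
  have dθ : ∀ p ∈ Ioo 0 (x b), HasDerivAt θ (y (θ p))⁻¹ p := by
    intro p hp
    have hc := inv_cont isOpen_Ioo isOpen_Ioo hθ mx hθx hθ2 sx' hp
    refine HasDerivAt.of_local_left_inverse hc (hx _ (Ioo_subset_Icc_self (hθ p hp)))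
      (hpos _ (Ioo_subset_Ico_self (hθ p hp))).ne' ?_
    filter_upwards [isOpen_Ioo.mem_nhds hp] with q hq using hθx q hq
  have hXm : ∀ l < Lf g (x b), Xf g l ∈ Ioo 0 (x b) := fun l hl => by
    refine ⟨(hg.X_spec l).1, ?_⟩
    rw [← hg.XL hxb]; exact hg.X_strict hl
  have tθb : Tendsto θ (𝓝[<] (x b)) (𝓝 b) := by
    rw [tendsto_order]
    constructor
    · intro c hc
      have hc' : max c ((a+b)/2) ∈ Ioo a b :=
        ⟨lt_of_lt_of_le (by linarith) (le_max_right _ _), max_lt hc (by linarith)⟩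
      filter_upwards [Ioo_mem_nhdsLT (mx hc').2] with p hp
      have hp' : p ∈ Ioo 0 (x b) := ⟨(mx hc').1.trans hp.1, hp.2⟩
      have := sθ (mx hc') hp' hp.1
      rw [hθ2 _ hc'] at this
      exact (le_max_left _ _).trans_lt this
    · intro c hc
      filter_upwards [Ioo_mem_nhdsLT hxb] with p hp
      exact (hθ p hp).2.trans hc
  have tθa : Tendsto θ (𝓝[>] 0) (𝓝 a) := by
    rw [tendsto_order]
    constructor
    · intro c hc
      filter_upwards [Ioo_mem_nhdsGT hxb] with p hp
      exact hc.trans (hθ p hp).1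
    · intro c hc
      have hc' : min c ((a+b)/2) ∈ Ioo a b :=
        ⟨lt_min hc (by linarith), lt_of_le_of_lt (min_le_right _ _) (by linarith)⟩
      filter_upwards [Ioo_mem_nhdsGT (mx hc').1] with p hp
      have hp' : p ∈ Ioo 0 (x b) := ⟨hp.1, hp.2.trans (mx hc').2⟩
      have := sθ hp' (mx hc') hp.2
      rw [hθ2 _ hc'] at this
      exact this.trans_le (min_le_left _ _)
  have tXB : Tendsto (Xf g) (𝓝[<] (Lf g (x b))) (𝓝[<] (x b)) := by
    refine tendsto_nhdsWithin_iff.2 ⟨?_, ?_⟩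
    · have := hg.X_cont.tendsto (Lf g (x b))
      rw [hg.XL hxb] at this
      exact this.mono_left nhdsWithin_le_nhds
    · filter_upwards [self_mem_nhdsWithin] with l hl using (hXm l hl).2
  have tX0 : Tendsto (Xf g) atBot (𝓝[>] 0) := by
    refine tendsto_nhdsWithin_iff.2 ⟨?_, Eventually.of_forall fun l => (hg.X_spec l).1⟩
    rw [tendsto_order]
    constructor
    · intro c hc
      exact Eventually.of_forall fun l => hc.trans (hg.X_spec l).1
    · intro c hc
      filter_upwards [eventually_lt_atBot (Lf g c)] with l hl
      rw [← hg.XL hc]; exact hg.X_strict hl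
  have cy : ∀ t ∈ Icc a b, ContinuousAt y t := fun t ht => (hy t ht).continuousAt
  refine ⟨fun l => y (θ (Xf g l)) / Real.exp l, ?_, ?_, ?_, ?_, hpos a ⟨le_rfl, hab⟩⟩
  · intro l hl
    exact div_pos (hpos _ (Ioo_subset_Ico_self (hθ _ (hXm l hl)))) (Real.exp_pos _)
  · intro l hl
    have hp := hXm l hl
    have ht := hθ _ hp
    have hyp := hpos _ (Ioo_subset_Ico_self ht)
    have d1 := (dθ _ hp).comp l (hg.X_der l)
    have d2 := (hy _ (Ioo_subset_Icc_self ht)).comp l d1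
    have d3 := d2.div (Real.hasDerivAt_exp l) (Real.exp_pos l).ne'
    refine d3.congr_deriv ?_
    simp only [Function.comp, hθx _ hp]
    have hgp := hg.gpos hp.1
    have he := Real.exp_pos l
    have hs : ∑ k ∈ Finset.range (N+1), o k (Xf g l) * y (θ (Xf g l)) ^ (2*k+1) =
        (y (θ (Xf g l)) * g (Xf g l) / Real.exp l) * ∑ k ∈ Finset.range (N+1), Qf g o k l * (y (θ (Xf g l)) / Real.exp l) ^ (2*k) := by
      rw [Finset.mul_sum]
      refine Finset.sum_congr rfl fun k _ => ?_
      unfold Qf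
      rw [div_pow]
      field_simp
      try ring
    rw [hs, Vz]
    generalize (∑ k ∈ Finset.range (N+1), Qf g o k l * (y (θ (Xf g l)) / Real.exp l) ^ (2*k)) = S
    field_simp
    ring
  · have h1 := ((cy b hb).tendsto.comp (tθb.comp tXB)).div
      ((Real.continuous_exp.tendsto (Lf g (x b))).mono_left nhdsWithin_le_nhds) (Real.exp_pos _).ne'
    rw [hyb, zero_div] at h1
    exact h1
  · have h1 := (cy a ha).tendsto.comp (tθa.comp tX0)
    refine h1.congr fun l => ?_
    simp only [Function.comp]
    field_simp


structure Sys (g : ℝ → ℝ) (N : ℕ) (o : ℕ → ℝ → ℝ) (ε : ℝ) : Prop where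
  gh : GHyp g
  ho : ∀ k ∈ Finset.range (N + 1), ContDiff ℝ 1 (o k)
  hH : ∀ k ∈ Finset.range (N + 1), ∀ x : ℝ, x ≠ 0 → 0 ≤ HgLHS g k (o k) x
  hf10 : o 0 0 < 0
  hε : 0 < ε
  hf1 : ∀ x : ℝ, ε < |x| → 0 < o 0 x
  hkbar : ∃ kbar ∈ Finset.Icc 1 N, ∀ x ∈ Icc (-ε) ε, 0 < o kbar x

def rg (g : ℝ → ℝ) : ℝ → ℝ := fun x => - g (-x)
def ro (o : ℕ → ℝ → ℝ) : ℕ → ℝ → ℝ := fun k x => o k (-x)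

lemma Gfun_rg (g : ℝ → ℝ) (x : ℝ) : Gfun (rg g) x = Gfun g (-x) := by
  unfold Gfun rg
  rw [intervalIntegral.integral_neg, intervalIntegral.integral_comp_neg (f := g), intervalIntegral.integral_symm]
  simp

lemma rg_der (g : ℝ → ℝ) (x : ℝ) : deriv (rg g) x = deriv g (-x) := by
  unfold rg
  rw [deriv.fun_neg, deriv_comp_neg]; simp

lemma HgLHS_r (g : ℝ → ℝ) (k : ℕ) (o : ℕ → ℝ → ℝ) (x : ℝ) :
    HgLHS (rg g) k (ro o k) x = HgLHS g k (o k) (-x) := by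
  unfold HgLHS
  rw [Gfun_rg, rg_der]
  have : deriv (ro o k) x = - deriv (o k) (-x) := by
    unfold ro; rw [deriv_comp_neg]
  rw [this]
  unfold rg ro
  have e : -deriv (o k) (-x) * -g (-x) - o k (-x) * deriv g (-x) = 
    (deriv (o k) (-x) * g (-x) - o k (-x) * deriv g (-x)) := by ring
  rw [e, div_neg]
  ring

lemma GHyp.refl {g : ℝ → ℝ} (h : GHyp g) : GHyp (rg g) where
  cd := (h.cd.comp contDiff_neg).neg
  d0 := by rw [rg_der]; simpa using h.d0
  sign := fun x hx => by
    have := h.sign (-x) (by simpa using hx)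
    unfold rg; linarith
  top := by
    have : Gfun (rg g) = Gfun g ∘ Neg.neg := funext fun x => Gfun_rg g x
    rw [this]; exact h.bot.comp tendsto_neg_atTop_atBot
  bot := by
    have : Gfun (rg g) = Gfun g ∘ Neg.neg := funext fun x => Gfun_rg g x
    rw [this]; exact h.top.comp tendsto_neg_atBot_atTop

lemma Sys.refl {g N o ε} (h : Sys g N o ε) : Sys (rg g) N (ro o) ε where
  gh := h.gh.refl
  ho := fun k hk => (h.ho k hk).comp contDiff_neg
  hH := fun k hk x hx => by
    rw [HgLHS_r]; exact h.hH k hk _ (by simpa using hx)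
  hf10 := by simpa [ro] using h.hf10
  hε := h.hε
  hf1 := fun x hx => h.hf1 _ (by simpa using hx)
  hkbar := by
    obtain ⟨k, hk, h1⟩ := h.hkbar
    exact ⟨k, hk, fun x hx => h1 _ ⟨by linarith [hx.2], by linarith [hx.1]⟩⟩

lemma GHyp.G_le {g : ℝ → ℝ} (h : GHyp g) : ∃ δ > 0, ∀ x, 0 < x → x < δ → Gfun g x ≤ x * g x := by
  have hc : Continuous (deriv g) := h.cd.continuous_deriv le_rfl
  obtain ⟨δ, hδ, hd⟩ := Metric.eventually_nhds_iff.1 (hc.continuousAt.eventually (lt_mem_nhds h.d0))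
  refine ⟨δ, hδ, fun x hx hxd => ?_⟩
  have hm : StrictMonoOn g (Icc 0 x) := by
    refine strictMonoOn_of_deriv_pos (convex_Icc 0 x) h.cd.continuous.continuousOn fun y hy => ?_
    rw [interior_Icc] at hy
    apply hd
    rw [Real.dist_eq, sub_zero, abs_of_pos hy.1]
    linarith [hy.2]
  obtain ⟨c, hc, he⟩ := exists_hasDerivAt_eq_slope (Gfun g) g hx h.G_cont.continuousOn
    fun y _ => h.G_der y
  rw [Gfun_zero, sub_zero, sub_zero, eq_div_iff hx.ne'] at he
  have := hm ⟨hc.1.le, hc.2.le⟩ ⟨hx.le, le_rfl⟩ hc.2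
  nlinarith

lemma Sys.o_nonneg_right {g N o ε} (h : Sys g N o ε) {k : ℕ} (hk : k ∈ Finset.range (N+1)) (hk1 : 1 ≤ k)
    {x : ℝ} (hx : 0 < x) : 0 ≤ o k x := by
  by_contra hneg
  push Not at hneg
  have hgx := h.gh.gpos hx
  obtain ⟨j, rfl⟩ : ∃ j, k = j + 1 := ⟨k-1, by omega⟩
  obtain ⟨δ, hδ, hd⟩ := h.gh.G_le
  obtain ⟨M, hM⟩ := (isCompact_Icc (a := (0:ℝ)) (b := 1)).exists_bound_of_continuousOn
    (h.ho _ hk).continuous.continuousOn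
  have hM0 : 0 ≤ M := (norm_nonneg _).trans (hM 0 (by simp))
  set Q := Qf g o (j+1) with hQ
  have hQ0 : Q (Lf g x) < 0 := by
    simp only [hQ, Qf, h.gh.XL hx]
    have := Real.exp_pos (Lf g x)
    have := mul_neg_of_neg_of_pos hneg (pow_pos this (2*(j+1)+1))
    exact div_neg_of_neg_of_pos this hgx
  have hmono := (goodQ h.gh h.ho h.hH).mono _ hk
  have hlim : Tendsto (fun l => 2 * M * Real.exp l) atBot (𝓝 (2 * M * 0)) :=
    Real.tendsto_exp_atBot.const_mul _
  rw [mul_zero] at hlim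
  obtain ⟨l, h1, h2, h3, h4, h5⟩ := ((hlim.eventually (gt_mem_nhds (neg_pos.2 hQ0))).and
    ((eventually_le_atBot (Lf g x)).and ((eventually_lt_atBot (Lf g δ)).and
    ((eventually_lt_atBot (Lf g 1)).and (eventually_le_atBot 0))))).exists
  obtain ⟨hX, hXG⟩ := h.gh.X_spec l
  have hXd : Xf g l < δ := by
    have := h.gh.X_strict h3; rwa [h.gh.XL hδ] at this
  have hX1 : Xf g l < 1 := by
    have := h.gh.X_strict h4; rwa [h.gh.XL one_pos] at this
  have hG := hd _ hX hXd
  have hgX := h.gh.gpos hX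
  have ho := hM (Xf g l) ⟨hX.le, hX1.le⟩
  rw [Real.norm_eq_abs, abs_le] at ho
  have hle : Q l ≤ Q (Lf g x) := hmono h2
  have hexp := Real.exp_pos l
  have hexp1 : Real.exp l ≤ 1 := by simpa using h5
  have : -(2 * M * Real.exp l) ≤ Q l := by
    simp only [hQ, Qf]
    rw [le_div_iff₀ hgX]
    have e1 : Real.exp l ^ (2*(j+1)+1) ≤ Real.exp l * (2 * g (Xf g l)) := by
      calc Real.exp l ^ (2*(j+1)+1) ≤ Real.exp l ^ 3 := pow_le_pow_of_le_one hexp.le hexp1 (by omega)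
        _ = Real.exp l * (2 * Gfun g (Xf g l)) := by rw [hXG]; ring
        _ ≤ _ := by
          apply mul_le_mul_of_nonneg_left _ hexp.le
          nlinarith
    have e0 : 0 < Real.exp l ^ (2*(j+1)+1) := by positivity
    nlinarith [mul_le_mul_of_nonneg_left e1 hM0]
  linarith

lemma Sys.o_nonneg {g N o ε} (h : Sys g N o ε) {k : ℕ} (hk : k ∈ Finset.range (N+1)) (hk1 : 1 ≤ k)
    (x : ℝ) : 0 ≤ o k x := by
  rcases lt_trichotomy x 0 with hx | hx | hx
  · have := h.refl.o_nonneg_right hk hk1 (x := -x) (by linarith)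
    simpa [ro] using this
  · rw [hx]
    refine ge_of_tendsto ((h.ho k hk).continuous.continuousWithinAt (s := Ioi 0) (x := 0)).tendsto ?_
    filter_upwards [self_mem_nhdsWithin] with x hx using (h.o_nonneg_right hk hk1 hx)
  · exact h.o_nonneg_right hk hk1 hx

def En (g : ℝ → ℝ) (p : ℝ × ℝ) : ℝ := Gfun g p.1 + p.2 ^ 2 / 2
def Dis (N : ℕ) (o : ℕ → ℝ → ℝ) (p : ℝ × ℝ) : ℝ :=
  ∑ k ∈ Finset.range (N + 1), o k p.1 * p.2 ^ (2 * k + 2)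
def phi (N : ℕ) (o : ℕ → ℝ → ℝ) (p : ℝ × ℝ) : ℝ :=
  ∑ k ∈ Finset.range (N + 1), o k p.1 * p.2 ^ (2 * k)

lemma Sys.phi_cont {g N o ε} (h : Sys g N o ε) : Continuous (phi N o) := by
  unfold phi
  refine continuous_finsetSum _ fun k hk => ?_
  have := (h.ho k hk).continuous
  fun_prop

lemma Sys.En_cont {g N o ε} (h : Sys g N o ε) : Continuous (En g) := by
  unfold En
  have := h.gh.G_cont
  fun_prop

lemma Dis_eq (N o p) : Dis N o p = p.2^2 * phi N o p := by
  unfold Dis phi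
  rw [Finset.mul_sum]
  refine Finset.sum_congr rfl fun k _ => by ring

lemma vf_eq (g N o p) : gOddVF g N o p = (p.2, - g p.1 - p.2 * phi N o p) := by
  unfold gOddVF phi
  rw [Finset.mul_sum]
  congr 2
  refine Finset.sum_congr rfl fun k _ => by ring

lemma Sys.hi {g N o ε} (h : Sys g N o ε) : ∃ E0 > 0, ∀ p, E0 ≤ En g p → 0 ≤ Dis N o p := by
  obtain ⟨kb, hkb, hpos⟩ := h.hkbar
  rw [Finset.mem_Icc] at hkb
  have hkr : kb ∈ Finset.range (N+1) := by rw [Finset.mem_range]; omega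
  have h0r : 0 ∈ Finset.range (N+1) := by rw [Finset.mem_range]; omega
  have hne : (Icc (-ε) ε).Nonempty := ⟨0, by constructor <;> linarith [h.hε]⟩
  obtain ⟨x1, hx1, hm1⟩ := isCompact_Icc.exists_isMinOn hne (h.ho _ hkr).continuous.continuousOn
  obtain ⟨x2, hx2, hm2⟩ := isCompact_Icc.exists_isMinOn hne (h.ho _ h0r).continuous.continuousOn
  obtain ⟨x3, hx3, hm3⟩ := isCompact_Icc.exists_isMaxOn hne h.gh.G_cont.continuousOn
  set c := o kb x1
  have hc : 0 < c := hpos _ hx1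
  set M := |o 0 x2|
  have hM : 0 ≤ M := abs_nonneg _
  refine ⟨Gfun g x3 + (M/c + 1)/2, ?_, fun p hp => ?_⟩
  · have := h.gh.G_nonneg x3; positivity
  by_cases hx : |p.1| ≤ ε
  · have hx' : p.1 ∈ Icc (-ε) ε := abs_le.1 hx
    have a1 : c ≤ o kb p.1 := hm1 hx'
    have a2 : -M ≤ o 0 p.1 := (neg_abs_le _).trans (hm2 hx')
    have a3 : Gfun g p.1 ≤ Gfun g x3 := hm3 hx'
    have hy : M/c + 1 ≤ p.2^2 := by unfold En at hp; linarith
    have hMc : 0 ≤ M/c := by positivity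
    have hyk : p.2^2 ≤ p.2^(2*kb) := by
      rw [pow_mul]
      calc p.2^2 = (p.2^2)^1 := by ring
        _ ≤ (p.2^2)^kb := pow_le_pow_right₀ (by linarith) hkb.1
    rw [Dis_eq]
    apply mul_nonneg (by positivity)
    unfold phi
    have hsub : ({0, kb} : Finset ℕ) ⊆ Finset.range (N+1) := by
      intro k hk; simp at hk; rcases hk with rfl | rfl <;> assumption
    have hle := Finset.sum_le_sum_of_subset_of_nonneg (f := fun k => o k p.1 * p.2 ^ (2 * k)) hsub (by
      intro k hk hk'
      simp at hk'
      have := h.o_nonneg hk (by omega) p.1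
      apply mul_nonneg this
      rw [pow_mul]; positivity)
    rw [Finset.sum_pair (by omega)] at hle
    refine le_trans ?_ hle
    have : M ≤ c * p.2^(2*kb) := by
      have : M/c ≤ p.2^(2*kb) := by linarith
      rw [div_le_iff₀ hc] at this; linarith
    have hpp : 0 ≤ p.2^(2*kb) := by rw [pow_mul]; positivity
    simp only [mul_zero, pow_zero, mul_one]
    nlinarith
  · push Not at hx
    unfold Dis
    refine Finset.sum_nonneg fun k hk => ?_
    have h2 : 0 ≤ p.2^(2*k+2) := by
      have : 2*k+2 = 2*(k+1) := by ring
      rw [this, pow_mul]; positivity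
    refine mul_nonneg ?_ h2
    rcases Nat.eq_zero_or_pos k with rfl | hk0
    · exact (h.hf1 _ hx).le
    · exact h.o_nonneg hk hk0 _

lemma Sys.lo {g N o ε} (h : Sys g N o ε) : ∃ e0 > 0, ∀ p, En g p ≤ e0 → Dis N o p ≤ 0 := by
  have h0 : phi N o (0,0) < 0 := by
    unfold phi
    rw [Finset.sum_eq_single 0]
    · simpa using h.hf10
    · intro k _ hk
      have : (0:ℝ)^(2*k) = 0 := zero_pow (by omega)
      simp [this]
    · intro hh; exact absurd (Finset.mem_range.2 (by omega)) hh
  obtain ⟨δ, hδ, hd⟩ := Metric.eventually_nhds_iff.1 (h.phi_cont.continuousAt.eventually (gt_mem_nhds h0))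
  have hp1 := h.gh.G_pos (x := δ/2) (by positivity)
  have hp2 := h.gh.G_pos (x := -(δ/2)) (by linarith)
  refine ⟨min (min (Gfun g (δ/2)) (Gfun g (-(δ/2)))) (δ^2/8), by positivity, fun p hp => ?_⟩
  rw [le_min_iff, le_min_iff] at hp
  obtain ⟨⟨q1, q2⟩, q3⟩ := hp
  unfold En at q1 q2 q3
  have hG := h.gh.G_nonneg p.1
  have y0 := sq_nonneg p.2
  have hy : |p.2| < δ := abs_lt_of_sq_lt_sq (by nlinarith) hδ.le
  have hx : |p.1| < δ := by
    rw [abs_lt]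
    constructor
    · by_contra hc
      push Not at hc
      have := h.gh.G_anti (a := p.1) (b := -(δ/2)) (by simp; linarith) (by simp; linarith) (by linarith)
      linarith
    · by_contra hc
      push Not at hc
      have := h.gh.G_mono (a := δ/2) (b := p.1) (by simp; linarith) (by simp; linarith) (by linarith)
      linarith
  rw [Dis_eq]
  have := hd (y := p) (by rw [Prod.dist_eq]; simp [hx, hy])
  nlinarith

lemma Sys.bdd {g N o ε} (h : Sys g N o ε) (C : ℝ) : ∃ R > 0, ∀ p, En g p ≤ C → |p.1| ≤ R ∧ |p.2| ≤ R := by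
  obtain ⟨a, ha⟩ := (h.gh.top.eventually_gt_atTop C).exists_forall_of_atTop
  obtain ⟨b, hb⟩ := eventually_atBot.1 (h.gh.bot.eventually_gt_atTop C)
  refine ⟨max (max |a| |b|) (2 * |C| + 1), by positivity, fun p hp => ⟨?_, ?_⟩⟩
  · unfold En at hp
    have y0 := sq_nonneg p.2
    refine le_max_of_le_left ?_
    rw [abs_le]
    constructor
    · by_contra hc
      push Not at hc
      have : p.1 ≤ b := by
        have := neg_abs_le b
        have := le_max_right |a| |b|
        linarith
      linarith [hb _ this]
    · by_contra hc
      push Not at hc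
      have : a ≤ p.1 := by
        have := le_abs_self a
        have := le_max_left |a| |b|
        linarith
      linarith [ha _ this]
  · refine le_max_of_le_right ?_
    unfold En at hp
    have hG := h.gh.G_nonneg p.1
    apply abs_le_of_sq_le_sq _ (by positivity)
    have := le_abs_self C
    have := abs_nonneg C
    nlinarith

lemma Sys.En_pos {g N o ε} (h : Sys g N o ε) {p : ℝ × ℝ} (hp : p ≠ 0) : 0 < En g p := by
  unfold En
  by_cases hx : p.1 = 0
  · have hy : p.2 ≠ 0 := fun hy => hp (Prod.ext hx hy)
    have := h.gh.G_nonneg p.1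
    positivity
  · have := h.gh.G_pos hx
    positivity

/-- the flow commutes with the point reflection -/
lemma vf_refl (g N o p) : gOddVF (rg g) N (ro o) p = - gOddVF g N o (-p) := by
  rw [vf_eq, vf_eq]
  have : phi N (ro o) p = phi N o (-p) := by
    unfold phi ro
    refine Finset.sum_congr rfl fun k _ => ?_
    simp [pow_mul]
  rw [this]
  ext <;> simp [rg]
  ring

lemma sol_refl {g N o γ s} (h : IsSolOn (gOddVF g N o) γ s) :
    IsSolOn (gOddVF (rg g) N (ro o)) (fun t => - γ t) s := by
  intro t ht
  rw [vf_refl, neg_neg]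
  exact (h t ht).neg


lemma barrier {f f' : ℝ → ℝ} {a C : ℝ} (hf : ∀ t, a ≤ t → HasDerivAt f (f' t) t) (ha : f a ≤ C)
    (hb : ∀ t, a ≤ t → C ≤ f t → f t ≤ C + 1 → f' t ≤ 0) : ∀ t, a ≤ t → f t ≤ C := by
  intro t ht
  have key : ∀ η > 0, η * (t - a) ≤ 1 → f t ≤ C + η * (t - a) := by
    intro η hη h1
    refine image_le_of_deriv_right_lt_deriv_boundary (f := f) (f' := f') (a := a) (b := t)
      (B := fun s => C + η * (s - a)) (B' := fun _ => η)
      (fun s hs => (hf s hs.1).continuousAt.continuousWithinAt)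
      (fun s hs => (hf s hs.1).hasDerivWithinAt) (by simpa using ha) ?_ ?_ ⟨ht, le_rfl⟩
    · intro s
      simpa using (((hasDerivAt_id s).sub_const a).const_mul η).const_add C
    · intro s hs he
      have h2 : 0 ≤ s - a := by linarith [hs.1]
      have h3 : η * (s - a) ≤ η * (t - a) := by
        apply mul_le_mul_of_nonneg_left _ hη.le; linarith [hs.2]
      have := hb s hs.1 (by rw [he]; nlinarith) (by rw [he]; linarith)
      linarith
  refine le_of_forall_pos_le_add fun δ hδ => ?_
  have hp : 0 < t - a + 1 := by linarith
  have hm : 0 < min δ 1 := by positivity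
  have h4 : (min δ 1 / (t - a + 1)) * (t - a) ≤ min δ 1 := by
    rw [div_mul_eq_mul_div, div_le_iff₀ hp]
    nlinarith
  have := key (min δ 1 / (t - a + 1)) (by positivity) (h4.trans (min_le_right _ _))
  have := min_le_left δ 1
  linarith

lemma lip_exists {V : ℝ × ℝ → ℝ × ℝ} {K L : NNReal} (hV : LipschitzWith K V) (hL : ∀ p, ‖V p‖ ≤ L)
    (p : ℝ × ℝ) : ∃ γ : ℝ → ℝ × ℝ, γ 0 = p ∧ ∀ t, HasDerivAt γ (V (γ t)) t := by
  have ex : ∀ a : NNReal, ∃ α : ℝ → ℝ × ℝ, α 0 = p ∧ ∀ t ∈ Ioo (-(a:ℝ)) a, HasDerivAt α (V (α t)) t := by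
    intro a
    have h0 : (0:ℝ) ∈ Icc (-(a:ℝ)) a := by constructor <;> simp
    have := IsPicardLindelof.of_time_independent (f := V) (t₀ := ⟨0, h0⟩) (x₀ := p) (a := L * a)
      (r := 0) (L := L) (K := K) (fun x _ => hL x) hV.lipschitzOnWith (by simp)
    obtain ⟨α, h1, h2⟩ := this.exists_eq_forall_mem_Icc_hasDerivWithinAt₀
    exact ⟨α, h1, fun t ht => (h2 t (Ioo_subset_Icc_self ht)).hasDerivAt (Icc_mem_nhds ht.1 ht.2)⟩
  choose α h0 h1 using ex
  have cons : ∀ a b : NNReal, a ≤ b → ∀ t : ℝ, |t| < a → α a t = α b t := by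
    intro a b hab t ht
    have hab' : (a:ℝ) ≤ b := by exact_mod_cast hab
    have ha : (0:ℝ) < a := (abs_nonneg t).trans_lt ht
    refine ODE_solution_unique_of_mem_Ioo (v := fun _ => V) (s := fun _ => univ) (K := K) (a := -(a:ℝ))
      (b := a) (t₀ := 0)
      (fun _ _ => hV.lipschitzOnWith) ⟨by linarith, ha⟩ (fun t ht => ⟨h1 a t ht, mem_univ _⟩)
      (fun t ht => ⟨h1 b t ⟨by linarith [ht.1], by linarith [ht.2]⟩, mem_univ _⟩) (by rw [h0, h0]) (abs_lt.1 ht)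
  let A : ℝ → NNReal := fun t => ⟨|t| + 1, by positivity⟩
  refine ⟨fun t => α (A t) t, h0 _, fun t => ?_⟩
  have hev : (fun t => α (A t) t) =ᶠ[𝓝 t] α (A t + 1) := by
    have : ∀ᶠ u in 𝓝 t, |u| < |t| + 1 :=
      continuous_abs.continuousAt.eventually (gt_mem_nhds (by linarith))
    filter_upwards [this] with u hu
    refine cons _ _ ?_ u ?_
    · rw [← NNReal.coe_le_coe, NNReal.coe_add]
      show |u| + 1 ≤ |t| + 1 + 1
      linarith
    · show |u| < |u| + 1
      linarith
  have e := hev.self_of_nhds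
  simp only at e ⊢
  rw [e]
  refine HasDerivAt.congr_of_eventuallyEq (h1 _ t (abs_lt.1 ?_)) hev
  show |t| < |t| + 1 + 1
  linarith

lemma Sys.VF_cd {g N o ε} (h : Sys g N o ε) : ContDiff ℝ 1 (gOddVF g N o) := by
  unfold gOddVF
  refine contDiff_snd.prodMk (((h.gh.cd.comp contDiff_fst).neg).sub ?_)
  refine ContDiff.sum fun k hk => ?_
  exact ((h.ho k hk).comp contDiff_fst).mul (contDiff_snd.pow _)

lemma Sys.lipbox {g N o ε} (h : Sys g N o ε) (R : ℝ) :
    ∃ K, LipschitzOnWith K (gOddVF g N o) (closedBall 0 R) :=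
  h.VF_cd.contDiffOn.exists_lipschitzOnWith one_ne_zero (convex_closedBall _ _) (isCompact_closedBall _ _)

lemma mem_box {p : ℝ × ℝ} {R : ℝ} : p ∈ closedBall (0 : ℝ × ℝ) R ↔ |p.1| ≤ R ∧ |p.2| ≤ R := by
  rw [mem_closedBall_zero_iff, Prod.norm_def, sup_le_iff]; rfl

lemma Sys.clampV {g N o ε} (h : Sys g N o ε) (R : ℝ) (hR : 0 < R) :
    ∃ V : ℝ × ℝ → ℝ × ℝ, ∃ K L : NNReal, LipschitzWith K V ∧ (∀ p, ‖V p‖ ≤ L) ∧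
      ∀ p ∈ closedBall (0 : ℝ × ℝ) R, V p = gOddVF g N o p := by
  obtain ⟨K, hK⟩ := h.lipbox R
  obtain ⟨L, hL⟩ := (isCompact_closedBall (0 : ℝ × ℝ) R).exists_bound_of_continuousOn
    h.VF_cd.continuous.continuousOn
  have hle : -R ≤ R := by linarith
  let c : ℝ → ℝ := fun x => projIcc (-R) R hle x
  have hc : LipschitzWith 1 c := LipschitzWith.projIcc hle
  have hcm : ∀ x, |c x| ≤ R := fun x => abs_le.2 (projIcc (-R) R hle x).2
  have hcid : ∀ x, |x| ≤ R → c x = x := fun x hx => by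
    simp only [c]; rw [projIcc_of_mem hle (abs_le.1 hx)]
  let cl : ℝ × ℝ → ℝ × ℝ := fun p => (c p.1, c p.2)
  have hcl : LipschitzWith 1 cl := by
    have := (hc.comp LipschitzWith.prod_fst).prodMk (hc.comp LipschitzWith.prod_snd)
    simpa using this
  have hclm : ∀ p, cl p ∈ closedBall (0 : ℝ × ℝ) R := fun p => mem_box.2 ⟨hcm _, hcm _⟩
  refine ⟨fun p => gOddVF g N o (cl p), K, L.toNNReal, ?_, fun p => ?_, fun p hp => ?_⟩
  · rw [← lipschitzOnWith_univ]
    have := hK.comp (hcl.lipschitzOnWith (s := univ)) (fun p _ => hclm p)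
    rw [mul_one] at this
    exact this
  · exact (hL _ (hclm p)).trans (Real.le_coe_toNNReal L)
  · have : cl p = p := by
      rw [mem_box] at hp
      simp only [cl, hcid _ hp.1, hcid _ hp.2]
    simp only [this]

lemma Sys.En_der {g N o ε} (h : Sys g N o ε) {γ : ℝ → ℝ × ℝ} {v : ℝ × ℝ} {t : ℝ} (hγ : HasDerivAt γ v t) :
    HasDerivAt (fun t => En g (γ t)) (g (γ t).1 * v.1 + (γ t).2 * v.2) t := by
  have h1 : HasDerivAt (fun t => (γ t).1) v.1 t := (hasFDerivAt_fst (𝕜 := ℝ) (p := γ t)).comp_hasDerivAt t hγ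
  have h2 : HasDerivAt (fun t => (γ t).2) v.2 t := (hasFDerivAt_snd (𝕜 := ℝ) (p := γ t)).comp_hasDerivAt t hγ
  unfold En
  refine (((h.gh.G_der _).comp t h1).add ((h2.pow 2).div_const 2)).congr_deriv ?_
  ring

lemma vf_dis (g : ℝ → ℝ) (N o) (p : ℝ × ℝ) :
    g p.1 * (gOddVF g N o p).1 + p.2 * (gOddVF g N o p).2 = - Dis N o p := by
  rw [vf_eq, Dis_eq]; simp only; ring

lemma Sys.up {g N o ε} (h : Sys g N o ε) : ∃ E0 > 0, ∀ (γ : ℝ → ℝ × ℝ) (V : ℝ × ℝ → ℝ × ℝ) (t0 C : ℝ),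
    E0 ≤ C → (∀ p, En g p ≤ C + 1 → V p = gOddVF g N o p) → IsSolOn V γ (Ici t0) → En g (γ t0) ≤ C →
    ∀ t, t0 ≤ t → En g (γ t) ≤ C := by
  obtain ⟨E0, hE, hd⟩ := h.hi
  refine ⟨E0, hE, fun γ V t0 C hC hV hγ h0 => ?_⟩
  refine barrier (fun t ht => h.En_der (hγ t ht)) h0 fun t ht h1 h2 => ?_
  rw [hV _ h2, vf_dis]
  have := hd (γ t) (hC.trans h1)
  linarith

lemma Sys.down {g N o ε} (h : Sys g N o ε) : ∃ e0 > 0, ∀ (γ : ℝ → ℝ × ℝ) (t0 c : ℝ),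
    c ≤ e0 → IsSolOn (gOddVF g N o) γ (Ici t0) → c ≤ En g (γ t0) →
    ∀ t, t0 ≤ t → c ≤ En g (γ t) := by
  obtain ⟨E0, hE, hd⟩ := h.lo
  refine ⟨E0, hE, fun γ t0 c hc hγ h0 t ht => ?_⟩
  have := barrier (C := -c) (fun t ht => (h.En_der (hγ t ht)).neg) (by simpa using h0) (fun t ht h1 h2 => by
    rw [vf_dis]
    simp only [Pi.neg_apply] at h1
    have := hd (γ t) (by linarith)
    linarith) t ht
  simp only [Pi.neg_apply] at this
  linarith

lemma Sys.sol_bdd {g N o ε} (h : Sys g N o ε) {γ t0} (hγ : IsSolOn (gOddVF g N o) γ (Ici t0)) :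
    ∃ R > 0, ∀ t, t0 ≤ t → γ t ∈ closedBall (0 : ℝ × ℝ) R := by
  obtain ⟨E0, hE, hu⟩ := h.up
  obtain ⟨R, hR, hb⟩ := h.bdd (max E0 (En g (γ t0)))
  exact ⟨R, hR, fun t ht => mem_box.2 (hb _ (hu γ _ t0 _ (le_max_left _ _) (fun _ _ => rfl) hγ (le_max_right _ _) t ht))⟩

lemma Sys.sol_low {g N o ε} (h : Sys g N o ε) {γ t0} (hγ : IsSolOn (gOddVF g N o) γ (Ici t0)) (h0 : γ t0 ≠ 0) :
    ∃ c > 0, ∀ t, t0 ≤ t → c ≤ En g (γ t) := by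
  obtain ⟨e0, he, hu⟩ := h.down
  have := h.En_pos h0
  exact ⟨min e0 (En g (γ t0)), by positivity, fun t ht =>
    hu γ t0 _ (min_le_left _ _) hγ (min_le_right _ _) t ht⟩

lemma Sys.gron {g N o ε} (h : Sys g N o ε) (R : ℝ) : ∃ K : ℝ, 0 ≤ K ∧ ∀ (γ γ' : ℝ → ℝ × ℝ) (a : ℝ),
    IsSolOn (gOddVF g N o) γ (Ici a) → IsSolOn (gOddVF g N o) γ' (Ici a) →
    (∀ t, a ≤ t → γ t ∈ closedBall (0 : ℝ × ℝ) R) → (∀ t, a ≤ t → γ' t ∈ closedBall (0 : ℝ × ℝ) R) →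
    ∀ t, a ≤ t → dist (γ t) (γ' t) ≤ dist (γ a) (γ' a) * Real.exp (K * (t - a)) := by
  obtain ⟨K, hK⟩ := h.lipbox R
  refine ⟨K, K.2, fun γ γ' a h1 h2 b1 b2 t ht => ?_⟩
  exact dist_le_of_trajectories_ODE_of_mem (v := fun _ => gOddVF g N o) (s := fun _ => closedBall 0 R)
    (a := a) (b := t) (K := K)
    (fun _ _ => hK) (fun s hs => (h1 s hs.1).continuousAt.continuousWithinAt)
    (fun s hs => (h1 s hs.1).hasDerivWithinAt) (fun s hs => b1 s hs.1)
    (fun s hs => (h2 s hs.1).continuousAt.continuousWithinAt)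
    (fun s hs => (h2 s hs.1).hasDerivWithinAt) (fun s hs => b2 s hs.1) le_rfl t ⟨ht, le_rfl⟩

lemma Sys.unique {g N o ε} (h : Sys g N o ε) {R : ℝ} {γ γ' : ℝ → ℝ × ℝ}
    (h1 : ∀ t, HasDerivAt γ (gOddVF g N o (γ t)) t) (h2 : ∀ t, HasDerivAt γ' (gOddVF g N o (γ' t)) t)
    (b1 : ∀ t, γ t ∈ closedBall (0 : ℝ × ℝ) R) (b2 : ∀ t, γ' t ∈ closedBall (0 : ℝ × ℝ) R) {t0 : ℝ}
    (he : γ t0 = γ' t0) : γ = γ' := by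
  obtain ⟨K, hK⟩ := h.lipbox R
  exact ODE_solution_unique_univ (v := fun _ => gOddVF g N o) (s := fun _ => closedBall 0 R)
    (K := K) (fun _ => hK) (fun t => ⟨h1 t, b1 t⟩) (fun t => ⟨h2 t, b2 t⟩) he

lemma HasDerivAt.shift {γ : ℝ → ℝ × ℝ} {v : ℝ × ℝ} {t a : ℝ} (h : HasDerivAt γ v (t + a)) :
    HasDerivAt (fun t => γ (t + a)) v t := by
  exact h.comp_add_const t a

lemma Sys.exists_sol {g N o ε} (h : Sys g N o ε) (p : ℝ × ℝ) : ∃ γ : ℝ → ℝ × ℝ, γ 0 = p ∧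
    IsSolOn (gOddVF g N o) γ (Ici 0) ∧ ∀ T > 0, γ T = p → (∀ t, γ (t + T) = γ t) ∧
      ∀ t, HasDerivAt γ (gOddVF g N o (γ t)) t := by
  obtain ⟨E0, hE, hu⟩ := h.up
  obtain ⟨R, hR, hb⟩ := h.bdd (max E0 (En g p) + 1)
  obtain ⟨V, K, L, hV, hL, hVe⟩ := h.clampV R hR
  obtain ⟨γ, h0, hγ⟩ := lip_exists hV hL p
  have hE' := hu γ V 0 (max E0 (En g p)) (le_max_left _ _) (fun q hq => hVe q (mem_box.2 (hb q hq)))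
    (fun t _ => hγ t) (by rw [h0]; exact le_max_right _ _)
  have hVF : ∀ t, 0 ≤ t → V (γ t) = gOddVF g N o (γ t) := fun t ht =>
    hVe _ (mem_box.2 (hb _ (by linarith [hE' t ht])))
  refine ⟨γ, h0, fun t ht => hVF t ht ▸ hγ t, fun T hT hTp => ?_⟩
  have hper : (fun t => γ (t + T)) = γ := by
    refine ODE_solution_unique_univ (v := fun _ => V) (s := fun _ => univ) (t₀ := 0)
      (K := K) (fun _ => hV.lipschitzOnWith) (fun t => ⟨(hγ (t+T)).shift, mem_univ _⟩)
      (fun t => ⟨hγ t, mem_univ _⟩) ?_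
    simp [hTp, h0]
  have hper' : ∀ t, γ (t + T) = γ t := fun t => congrFun hper t
  refine ⟨hper', fun t => ?_⟩
  have hn : ∀ n : ℕ, ∀ t, γ (t + n * T) = γ t := by
    intro n
    induction n with
    | zero => simp
    | succ n ih =>
      intro t
      rw [show t + ((n+1:ℕ):ℝ) * T = (t + n * T) + T by push_cast; ring, hper', ih]
  obtain ⟨n, hn'⟩ := exists_nat_ge (-t / T)
  rw [div_le_iff₀ hT] at hn'
  have := hVF (t + n * T) (by linarith)
  rw [hn n t] at this
  rw [← this]
  exact hγ t


lemma sol_x {g N o γ s} (h : IsSolOn (gOddVF g N o) γ s) {t : ℝ} (ht : t ∈ s) :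
    HasDerivAt (fun t => (γ t).1) (γ t).2 t := by
  have := (hasFDerivAt_fst (𝕜 := ℝ) (p := γ t)).comp_hasDerivAt t (h t ht)
  rw [vf_eq] at this
  exact this

lemma sol_y {g N o γ s} (h : IsSolOn (gOddVF g N o) γ s) {t : ℝ} (ht : t ∈ s) :
    HasDerivAt (fun t => (γ t).2) (-g (γ t).1 - (γ t).2 * phi N o (γ t)) t := by
  have := (hasFDerivAt_snd (𝕜 := ℝ) (p := γ t)).comp_hasDerivAt t (h t ht)
  rw [vf_eq] at this
  exact this

lemma no_lin {f f' : ℝ → ℝ} {a m B : ℝ} (hm : 0 < m) (hf : ∀ t, a ≤ t → HasDerivAt f (f' t) t)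
    (h1 : ∀ t, a ≤ t → m ≤ f' t) (h2 : ∀ t, a ≤ t → f t ≤ B) : False := by
  have key : ∀ t, a ≤ t → m * (t - a) ≤ f t - f a := by
    intro t ht
    refine (convex_Ici a).mul_sub_le_image_sub_of_le_deriv (f := f)
      (fun s hs => (hf s hs).continuousAt.continuousWithinAt)
      (fun s hs => ?_) (fun s hs => ?_) a (mem_Ici.2 le_rfl) t ht ht
    · rw [interior_Ici] at hs
      exact (hf s (le_of_lt hs)).differentiableAt.differentiableWithinAt
    · rw [interior_Ici] at hs
      rw [(hf s (le_of_lt hs)).deriv]; exact h1 s (le_of_lt hs)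
  have hB := h2 a le_rfl
  have hp : 0 ≤ (B - f a + 1) / m := div_nonneg (by linarith) hm.le
  have := key (a + (B - f a + 1) / m) (by linarith)
  have e : m * (a + (B - f a + 1) / m - a) = B - f a + 1 := by field_simp; ring
  have := h2 (a + (B - f a + 1) / m) (by linarith)
  linarith

lemma first_zero {f : ℝ → ℝ} {a b : ℝ} (hab : a ≤ b) (hc : ContinuousOn f (Icc a b)) (ha : 0 < f a) (hb : f b ≤ 0) :
    ∃ τ, a < τ ∧ τ ≤ b ∧ f τ = 0 ∧ ∀ t ∈ Ico a τ, 0 < f t := by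
  obtain ⟨c, hc1, hc2⟩ := intermediate_value_Icc' hab hc ⟨hb, ha.le⟩
  have hcl : IsClosed (Icc a b ∩ f ⁻¹' {0}) := hc.preimage_isClosed_of_isClosed isClosed_Icc isClosed_singleton
  have hcomp : IsCompact (Icc a b ∩ f ⁻¹' {0}) := isCompact_Icc.of_isClosed_subset hcl inter_subset_left
  obtain ⟨τ, hτ, hl⟩ := hcomp.exists_isLeast ⟨c, hc1, hc2⟩
  have hτ0 : f τ = 0 := hτ.2
  refine ⟨τ, hτ.1.1.lt_of_ne ?_, hτ.1.2, hτ0, fun t ht => ?_⟩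
  · rintro rfl; linarith
  by_contra hn
  push Not at hn
  obtain ⟨d, hd1, hd2⟩ := intermediate_value_Icc' ht.1 (hc.mono (Icc_subset_Icc_right (ht.2.le.trans hτ.1.2))) ⟨hn, ha.le⟩
  have := hl ⟨⟨hd1.1, hd1.2.trans (ht.2.le.trans hτ.1.2)⟩, hd2⟩
  linarith [hd1.2, ht.2]

lemma sign_of_der {f : ℝ → ℝ} {d t : ℝ} (h : HasDerivAt f d t) (h0 : f t = 0) (hd : d < 0) :
    (∀ᶠ u in 𝓝[<] t, 0 < f u) ∧ ∀ᶠ u in 𝓝[>] t, f u < 0 := by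
  have e := (hasDerivAt_iff_tendsto_slope.1 h).eventually (gt_mem_nhds hd)
  constructor
  · have e' := e.filter_mono (nhdsWithin_mono t (show Iio t ⊆ {t}ᶜ from fun u hu => ne_of_lt hu))
    filter_upwards [e', self_mem_nhdsWithin] with u hu hut
    have hut' : u < t := hut
    rw [slope_def_field, h0, sub_zero] at hu
    by_contra hc
    push Not at hc
    have := div_nonneg_of_nonpos hc (by linarith : u - t ≤ 0)
    linarith
  · have e' := e.filter_mono (nhdsWithin_mono t (show Ioi t ⊆ {t}ᶜ from fun u hu => ne_of_gt hu))
    filter_upwards [e', self_mem_nhdsWithin] with u hu hut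
    have hut' : t < u := hut
    rw [slope_def_field, h0, sub_zero] at hu
    by_contra hc
    push Not at hc
    have := div_nonneg hc (by linarith : 0 ≤ u - t)
    linarith

section
variable {g : ℝ → ℝ} {N : ℕ} {o : ℕ → ℝ → ℝ} {ε : ℝ} {γ : ℝ → ℝ × ℝ} {t0 : ℝ}

lemma IsSolOn.mono' {F} {a b : ℝ} (h : IsSolOn F γ (Ici a)) (hab : a ≤ b) : IsSolOn F γ (Ici b) :=
  fun t ht => h t (le_trans hab ht)

lemma Sys.no_pos (h : Sys g N o ε) (hγ : IsSolOn (gOddVF g N o) γ (Ici t0))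
    (hy : ∀ t, t0 ≤ t → 0 < (γ t).2) : False := by
  have hne : γ t0 ≠ 0 := fun h0 => by have := hy t0 le_rfl; rw [h0] at this; simp at this
  obtain ⟨R, hR, hb⟩ := h.sol_bdd hγ
  obtain ⟨c, hc, hE⟩ := h.sol_low hγ hne
  obtain ⟨K, hK⟩ := (isCompact_closedBall (0:ℝ×ℝ) R).exists_bound_of_continuousOn h.phi_cont.continuousOn
  have hK0 : 0 ≤ K := (norm_nonneg _).trans (hK _ (hb t0 le_rfl))
  have hφ : ∀ t, t0 ≤ t → -K ≤ phi N o (γ t) ∧ phi N o (γ t) ≤ K := fun t ht => abs_le.1 (hK _ (hb t ht))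
  have hx : ∀ t, t0 ≤ t → -R ≤ (γ t).1 ∧ (γ t).1 ≤ R := fun t ht => abs_le.1 (mem_box.1 (hb t ht)).1
  have hyb : ∀ t, t0 ≤ t → -R ≤ (γ t).2 ∧ (γ t).2 ≤ R := fun t ht => abs_le.1 (mem_box.1 (hb t ht)).2
  have dx := fun t (ht : t0 ≤ t) => sol_x hγ ht
  have dy := fun t (ht : t0 ≤ t) => sol_y hγ ht
  have mono : ∀ a b, t0 ≤ a → a ≤ b → (γ a).1 ≤ (γ b).1 := by
    intro a b ha hab
    refine monotoneOn_of_deriv_nonneg (f := fun t => (γ t).1) (convex_Ici t0)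
      (fun s hs => (dx s hs).continuousAt.continuousWithinAt)
      (fun s hs => ?_) (fun s hs => ?_) ha (ha.trans hab) hab
    · rw [interior_Ici] at hs
      exact (dx s (le_of_lt hs)).differentiableAt.differentiableWithinAt
    · rw [interior_Ici] at hs
      rw [(dx s (le_of_lt hs)).deriv]; exact (hy s (le_of_lt hs)).le
  by_cases hA : ∃ t1, t0 ≤ t1 ∧ 0 < (γ t1).1
  · obtain ⟨t1, ht1, hx1⟩ := hA
    obtain ⟨x1, hx1m, hmin⟩ := (isCompact_Icc (a := (γ t1).1) (b := R)).exists_isMinOn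
      ⟨(γ t1).1, le_rfl, (hx t1 ht1).2⟩ h.gh.cd.continuous.continuousOn
    have hm : 0 < g x1 := h.gh.gpos (hx1.trans_le hx1m.1)
    refine no_lin (f := fun t => K * (γ t).1 - (γ t).2) (a := t1) (B := K * R + R) hm
      (fun t ht => ((dx t (ht1.trans ht)).const_mul K).sub (dy t (ht1.trans ht))) (fun t ht => ?_) (fun t ht => ?_)
    · have ht' := ht1.trans ht
      have : g x1 ≤ g (γ t).1 := hmin ⟨mono _ _ ht1 ht, (hx t ht').2⟩
      have := hφ t ht'
      have := hy t ht'
      nlinarith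
    · have ht' := ht1.trans ht
      have := hx t ht'
      have := hyb t ht'
      nlinarith
  · push Not at hA
    have e : ∀ᶠ x in 𝓝 (0:ℝ), Gfun g x < c / 2 :=
      h.gh.G_cont.continuousAt.eventually (gt_mem_nhds (by rw [Gfun_zero]; linarith))
    obtain ⟨δ, hδ, hd⟩ := Metric.eventually_nhds_iff.1 e
    by_cases hB : ∃ t1, t0 ≤ t1 ∧ -δ < (γ t1).1
    · obtain ⟨t1, ht1, hx1⟩ := hB
      have hs : 0 < √c := Real.sqrt_pos.2 hc
      refine no_lin (f := fun t => (γ t).1) (a := t1) (B := 0) hs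
        (fun t ht => dx t (ht1.trans ht)) (fun t ht => ?_) (fun t ht => hA t (ht1.trans ht))
      have ht' := ht1.trans ht
      have h1 := hd (y := (γ t).1) (by
        rw [Real.dist_eq, sub_zero, abs_lt]
        constructor <;> linarith [mono _ _ ht1 ht, hA t ht'])
      have h2 := hE t ht'
      unfold En at h2
      apply Real.sqrt_le_iff.2
      exact ⟨(hy t ht').le, by linarith⟩
    · push Not at hB
      obtain ⟨x1, hx1m, hmin⟩ := (isCompact_Icc (a := -R) (b := -δ)).exists_isMaxOn
        ⟨(γ t0).1, (hx t0 le_rfl).1, hB t0 le_rfl⟩ h.gh.cd.continuous.continuousOn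
      have hm : g x1 < 0 := h.gh.gneg (by linarith [hx1m.2])
      refine no_lin (f := fun t => K * (γ t).1 + (γ t).2) (a := t0) (B := K * R + R) (m := - g x1) (by linarith)
        (fun t ht => ((dx t ht).const_mul K).add (dy t ht)) (fun t ht => ?_) (fun t ht => ?_)
      · have : g (γ t).1 ≤ g x1 := hmin ⟨(hx t ht).1, hB t ht⟩
        have := hφ t ht
        have := hy t ht
        nlinarith
      · have := hx t ht
        have := hyb t ht
        nlinarith

lemma sol_ne (h : Sys g N o ε) (hγ : IsSolOn (gOddVF g N o) γ (Ici t0)) (h0 : γ t0 ≠ 0) {t : ℝ} (ht : t0 ≤ t) :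
    γ t ≠ 0 := by
  obtain ⟨c, hc, hE⟩ := h.sol_low hγ h0
  intro h1
  have := hE t ht
  rw [h1] at this
  simp [En, Gfun_zero] at this
  linarith

lemma Sys.stepA (h : Sys g N o ε) (hγ : IsSolOn (gOddVF g N o) γ (Ici t0)) (hy : 0 < (γ t0).2) :
    ∃ τ, t0 < τ ∧ (γ τ).2 = 0 ∧ 0 < (γ τ).1 ∧ ∀ t ∈ Ico t0 τ, 0 < (γ t).2 := by
  have hex : ∃ b, t0 ≤ b ∧ (γ b).2 ≤ 0 := by
    by_contra hc
    push Not at hc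
    exact h.no_pos hγ hc
  obtain ⟨b, hb, hyb⟩ := hex
  obtain ⟨τ, h1, h2, h3, h4⟩ := first_zero (f := fun t => (γ t).2) hb
    (fun t ht => (sol_y hγ (mem_Ici.2 ht.1)).continuousAt.continuousWithinAt) hy hyb
  have hne : γ t0 ≠ 0 := fun h0 => by rw [h0] at hy; simp at hy
  have hτ := sol_ne h hγ hne h1.le
  have hxne : (γ τ).1 ≠ 0 := fun hx => hτ (Prod.ext hx h3)
  refine ⟨τ, h1, h3, ?_, h4⟩
  by_contra hneg
  have hxneg : (γ τ).1 < 0 := lt_of_le_of_ne (not_lt.1 hneg) hxne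
  have d := (sol_y hγ (mem_Ici.2 h1.le)).neg
  have hs := sign_of_der d (by simpa using h3) (by
    rw [h3]; have := h.gh.gneg hxneg; simp; linarith)
  obtain ⟨u, hu1, hu2⟩ := (hs.1.and (Ioo_mem_nhdsLT h1)).exists
  have := h4 u ⟨hu2.1.le, hu2.2⟩
  simp at hu1
  linarith

lemma Sys.stepA' (h : Sys g N o ε) (hγ : IsSolOn (gOddVF g N o) γ (Ici t0)) (hy : (γ t0).2 < 0) :
    ∃ τ, t0 < τ ∧ (γ τ).2 = 0 ∧ (γ τ).1 < 0 ∧ ∀ t ∈ Ico t0 τ, (γ t).2 < 0 := by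
  obtain ⟨τ, h1, h2, h3, h4⟩ := h.refl.stepA (sol_refl hγ) (by simpa using hy)
  exact ⟨τ, h1, by simpa using h2, by simpa using h3, fun t ht => by simpa using h4 t ht⟩

lemma Sys.stepB (h : Sys g N o ε) (hγ : IsSolOn (gOddVF g N o) γ (Ici t0)) (hy : (γ t0).2 = 0)
    (hx : 0 < (γ t0).1) :
    ∃ σ, t0 < σ ∧ (γ σ).2 = 0 ∧ (γ σ).1 < 0 ∧ ∀ t ∈ Ioo t0 σ, (γ t).2 < 0 := by
  have hs := (sign_of_der (sol_y hγ (mem_Ici.2 le_rfl)) hy (by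
    rw [hy]; have := h.gh.gpos hx; simp; linarith)).2
  obtain ⟨u, hu, hu'⟩ := mem_nhdsGT_iff_exists_Ioc_subset.1 hs
  have hut : t0 < u := hu
  obtain ⟨σ, h1, h2, h3, h4⟩ := h.stepA' (hγ.mono' hut.le) (hu' ⟨hut, le_rfl⟩)
  refine ⟨σ, hut.trans h1, h2, h3, fun t ht => ?_⟩
  rcases le_or_gt t u with htu | htu
  · exact hu' ⟨ht.1, htu⟩
  · exact h4 t ⟨htu.le, ht.2⟩

lemma Sys.stepB' (h : Sys g N o ε) (hγ : IsSolOn (gOddVF g N o) γ (Ici t0)) (hy : (γ t0).2 = 0)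
    (hx : (γ t0).1 < 0) :
    ∃ σ, t0 < σ ∧ (γ σ).2 = 0 ∧ 0 < (γ σ).1 ∧ ∀ t ∈ Ioo t0 σ, 0 < (γ t).2 := by
  obtain ⟨τ, h1, h2, h3, h4⟩ := h.refl.stepB (sol_refl hγ) (by simpa using hy) (by simpa using hx)
  exact ⟨τ, h1, by simpa using h2, by simpa using h3, fun t ht => by simpa using h4 t ht⟩

lemma Sys.reach0 (h : Sys g N o ε) (hγ : IsSolOn (gOddVF g N o) γ (Ici t0)) (hy : (γ t0).2 = 0)
    (hx : (γ t0).1 < 0) : ∃ t, t0 ≤ t ∧ (γ t).1 = 0 ∧ 0 < (γ t).2 := by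
  obtain ⟨σ, h1, h2, h3, h4⟩ := h.stepB' hγ hy hx
  obtain ⟨c, hc1, hc2⟩ := intermediate_value_Ioo h1.le
    (f := fun t => (γ t).1) (fun t ht => (sol_x hγ (mem_Ici.2 ht.1)).continuousAt.continuousWithinAt)
    (show (0:ℝ) ∈ Ioo _ _ from ⟨hx, h3⟩)
  exact ⟨c, hc1.1.le, hc2, h4 c hc1⟩

lemma Sys.reach (h : Sys g N o ε) (hγ : IsSolOn (gOddVF g N o) γ (Ici t0)) (h0 : γ t0 ≠ 0) :
    ∃ t, t0 ≤ t ∧ (γ t).1 = 0 ∧ 0 < (γ t).2 := by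
  have A : ∀ a, t0 ≤ a → (γ a).2 = 0 → (γ a).1 < 0 → ∃ t, t0 ≤ t ∧ (γ t).1 = 0 ∧ 0 < (γ t).2 := by
    intro a ha h1 h2
    obtain ⟨t, ht, h3⟩ := h.reach0 (hγ.mono' ha) h1 h2
    exact ⟨t, ha.trans ht, h3⟩
  have B : ∀ a, t0 ≤ a → (γ a).2 = 0 → 0 < (γ a).1 → ∃ t, t0 ≤ t ∧ (γ t).1 = 0 ∧ 0 < (γ t).2 := by
    intro a ha h1 h2
    obtain ⟨t, ht, h3, h4, _⟩ := h.stepB (hγ.mono' ha) h1 h2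
    exact A t (ha.trans ht.le) h3 h4
  rcases lt_trichotomy (γ t0).2 0 with hy | hy | hy
  · obtain ⟨τ, h1, h2, h3, _⟩ := h.stepA' hγ hy
    exact A τ h1.le h2 h3
  · have hx : (γ t0).1 ≠ 0 := fun hx => h0 (Prod.ext hx hy)
    rcases hx.lt_or_gt with hx | hx
    · exact A t0 le_rfl hy hx
    · exact B t0 le_rfl hy hx
  · obtain ⟨τ, h1, h2, h3, _⟩ := h.stepA hγ hy
    exact B τ h1.le h2 h3

lemma Sys.halfR (h : Sys g N o ε) (hγ : IsSolOn (gOddVF g N o) γ (Ici t0)) (hx : (γ t0).1 = 0)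
    (hy : 0 < (γ t0).2) :
    ∃ τ t1, t0 < τ ∧ τ < t1 ∧ (γ τ).2 = 0 ∧ (γ t1).1 = 0 ∧ (γ t1).2 < 0 ∧ (∀ t ∈ Ioo t0 t1, 0 < (γ t).1) ∧
      Half N (Qf g o) (γ t0).2 (-(γ t1).2) := by
  obtain ⟨τ, h1, h2, h3, h4⟩ := h.stepA hγ hy
  obtain ⟨σ, k1, k2, k3, k4⟩ := h.stepB (hγ.mono' h1.le) h2 h3
  have dx := fun t (ht : t0 ≤ t) => sol_x hγ (mem_Ici.2 ht)
  have hyd : ∀ t, t0 ≤ t → HasDerivAt (fun t => (γ t).2)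
      (-g (γ t).1 - ∑ k ∈ Finset.range (N + 1), o k (γ t).1 * (γ t).2 ^ (2 * k + 1)) t := by
    intro t ht
    have := (hasFDerivAt_snd (𝕜 := ℝ) (p := γ t)).comp_hasDerivAt t (hγ t ht)
    exact this
  obtain ⟨t1, ht1, hx1⟩ := intermediate_value_Ioo' k1.le
    (f := fun t => (γ t).1) (fun t ht => (dx t (h1.le.trans ht.1)).continuousAt.continuousWithinAt)
    (show (0:ℝ) ∈ Ioo _ _ from ⟨k3, h3⟩)
  have hx1 : (γ t1).1 = 0 := hx1
  have hy1 := k4 t1 ht1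
  refine ⟨τ, t1, h1, ht1.1, h2, hx1, hy1, fun t ht => ?_, ?_⟩
  · rcases le_or_gt t τ with htt | htt
    · have : StrictMonoOn (fun t => (γ t).1) (Icc t0 τ) := by
        apply strictMonoOn_of_deriv_pos (convex_Icc _ _)
          (fun t ht => (dx t ht.1).continuousAt.continuousWithinAt)
        intro s hs
        rw [interior_Icc] at hs
        rw [(dx s hs.1.le).deriv]
        exact h4 s ⟨hs.1.le, hs.2⟩
      have := this ⟨le_rfl, h1.le⟩ ⟨ht.1.le, htt⟩ ht.1
      simp only at this
      rwa [hx] at this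
    · have : StrictAntiOn (fun t => (γ t).1) (Icc τ t1) := by
        apply strictAntiOn_of_deriv_neg (convex_Icc _ _)
          (fun t ht => (dx t (h1.le.trans ht.1)).continuousAt.continuousWithinAt)
        intro s hs
        rw [interior_Icc] at hs
        rw [(dx s (h1.le.trans hs.1.le)).deriv]
        exact k4 s ⟨hs.1, hs.2.trans ht1.2⟩
      have := this ⟨htt.le, ht.2.le⟩ ⟨ht1.1.le, le_rfl⟩ ht.2
      simp only at this
      rwa [hx1] at this
  · obtain ⟨_, z, hz⟩ := arc_of_sol h.gh (N := N) (o := o) (x := fun t => (γ t).1) (y := fun t => (γ t).2) h1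
      (fun t ht => dx t ht.1) (fun t ht => hyd t ht.1) hx h4 h2
    obtain ⟨_, w, hw⟩ := arc_of_sol h.gh (N := N) (o := fun k x => - o k x) (x := fun t => (γ (-t)).1)
      (y := fun t => -(γ (-t)).2) (a := -t1) (b := -τ) (by linarith [ht1.1])
      (fun t ht => by
        have := (dx (-t) (by linarith [ht.2])).scomp t (hasDerivAt_neg t)
        simpa [Function.comp_def] using this)
      (fun t ht => by
        have := ((hyd (-t) (by linarith [ht.2])).scomp t (hasDerivAt_neg t)).neg
        refine this.congr_deriv ?_
        simp only [smul_eq_mul, neg_mul, one_mul, neg_neg]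
        congr 1
        refine Finset.sum_congr rfl fun k _ => ?_
        rw [Odd.neg_pow ⟨k, rfl⟩]; ring)
      (by simpa using hx1)
      (fun t ht => by
        rcases eq_or_lt_of_le ht.1 with he | he
        · rw [← he, neg_neg]; linarith
        · have := k4 (-t) ⟨by linarith [ht.2], by linarith [ht1.2]⟩
          linarith)
      (by simpa using h2)
    simp only [neg_neg] at hw
    refine ⟨_, z, w, hz, ?_⟩
    convert hw using 1
    funext k l
    simp [Qf, neg_div]

lemma Sys.halfL (h : Sys g N o ε) (hγ : IsSolOn (gOddVF g N o) γ (Ici t0)) (hx : (γ t0).1 = 0)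
    (hy : (γ t0).2 < 0) :
    ∃ t1, t0 < t1 ∧ (γ t1).1 = 0 ∧ 0 < (γ t1).2 ∧ (∀ t ∈ Ioo t0 t1, (γ t).1 < 0) ∧
      Half N (Qf (rg g) (ro o)) (-(γ t0).2) (γ t1).2 := by
  obtain ⟨τ, t1, h1, h2, h3, h4, h5, h6, h7⟩ := h.refl.halfR (sol_refl hγ) (by simpa using hx) (by simpa using hy)
  exact ⟨t1, h1.trans h2, by simpa using h4, by simpa using h5, fun t ht => by simpa using h6 t ht, by simpa using h7⟩

def Ret (g : ℝ → ℝ) (N : ℕ) (o : ℕ → ℝ → ℝ) (s s'' : ℝ) : Prop :=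
  ∃ s', Half N (Qf g o) s s' ∧ Half N (Qf (rg g) (ro o)) s' s''

lemma Sys.ret (h : Sys g N o ε) (hγ : IsSolOn (gOddVF g N o) γ (Ici t0)) (hx : (γ t0).1 = 0)
    (hy : 0 < (γ t0).2) :
    ∃ τ t1, t0 < τ ∧ τ < t1 ∧ (γ τ).2 = 0 ∧ (γ t1).1 = 0 ∧ 0 < (γ t1).2 ∧
      (∀ t ∈ Ioo t0 t1, (γ t).1 = 0 → (γ t).2 < 0) ∧ Ret g N o (γ t0).2 (γ t1).2 := by
  obtain ⟨τ, t1, h1, h2, h3, h4, h5, h6, h7⟩ := h.halfR hγ hx hy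
  obtain ⟨t2, k1, k2, k3, k4, k5⟩ := h.halfL (hγ.mono' (h1.trans h2).le) h4 h5
  refine ⟨τ, t2, h1, h2.trans k1, h3, k2, k3, fun t ht hxt => ?_, _, h7, k5⟩
  rcases lt_trichotomy t t1 with hh | hh | hh
  · have := h6 t ⟨ht.1, hh⟩; linarith
  · rw [hh]; exact h5
  · have := k4 t ⟨hh, ht.2⟩; linarith
end


section
variable {g : ℝ → ℝ} {N : ℕ} {o : ℕ → ℝ → ℝ} {ε : ℝ} {γ : ℝ → ℝ × ℝ} {t0 : ℝ}

lemma Sys.gR (h : Sys g N o ε) : GoodQ N (Qf g o) := goodQ h.gh h.ho h.hH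

lemma Ret.pos {s s'' : ℝ} (h : Ret g N o s s'') : 0 < s ∧ 0 < s'' := by
  obtain ⟨s', h1, h2⟩ := h
  exact ⟨h1.pos.1, h2.pos.2⟩

lemma Ret.le (h : Sys g N o ε) {s₁ s₁' s₂ s₂' r : ℝ} (h1 : Ret g N o s₁ s₁') (h2 : Ret g N o s₂ s₂')
    (hr : 1 ≤ r) (hs : s₂ ≤ r * s₁) : s₂' ≤ r * s₁' := by
  obtain ⟨u, a1, a2⟩ := h1
  obtain ⟨v, b1, b2⟩ := h2
  exact Half.le h.refl.gR a2 b2 hr (Half.le h.gR a1 b1 hr hs)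

lemma Ret.lt (h : Sys g N o ε) (hS : StrictQ N (Qf g o) ∨ StrictQ N (Qf (rg g) (ro o)))
    {s₁ s₁' s₂ s₂' r : ℝ} (h1 : Ret g N o s₁ s₁') (h2 : Ret g N o s₂ s₂')
    (hr : 1 < r) (hs : s₂ ≤ r * s₁) : s₂' < r * s₁' := by
  have hp := h1.pos.2
  obtain ⟨u, a1, a2⟩ := h1
  obtain ⟨v, b1, b2⟩ := h2
  rcases hS with hS | hS
  · obtain ⟨r', c1, c2, c3⟩ := Half.lt h.gR hS a1 b1 hr hs
    have := Half.le h.refl.gR a2 b2 c1 c3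
    nlinarith
  · obtain ⟨r', c1, c2, c3⟩ := Half.lt h.refl.gR hS a2 b2 hr (Half.le h.gR a1 b1 hr.le hs)
    nlinarith

lemma Ret.unique (h : Sys g N o ε) {s a b : ℝ} (h1 : Ret g N o s a) (h2 : Ret g N o s b) : a = b := by
  have e1 := Ret.le h h1 h2 le_rfl (by simp)
  have e2 := Ret.le h h2 h1 le_rfl (by simp)
  simp at e1 e2
  linarith

lemma Sys.ret_sol (h : Sys g N o ε) {s : ℝ} (hs : 0 < s) : ∃ (γ : ℝ → ℝ × ℝ) (t1 : ℝ),
    IsSolOn (gOddVF g N o) γ (Ici 0) ∧ γ 0 = (0, s) ∧ 0 < t1 ∧ (γ t1).1 = 0 ∧ Ret g N o s (γ t1).2 := by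
  obtain ⟨γ, h0, hγ, _⟩ := h.exists_sol (0, s)
  obtain ⟨τ, t1, k1, k2, k3, k4, k5, k6, k7⟩ := h.ret hγ (by simp [h0]) (by simpa [h0] using hs)
  rw [h0] at k7
  exact ⟨γ, t1, hγ, h0, k1.trans k2, k4, k7⟩

lemma En_axis (g : ℝ → ℝ) {p : ℝ × ℝ} (hp : p.1 = 0) : En g p = p.2 ^ 2 / 2 := by
  simp [En, hp, Gfun_zero]

lemma Sys.fix (h : Sys g N o ε) (hS : StrictQ N (Qf g o) ∨ StrictQ N (Qf (rg g) (ro o))) :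
    ∃ S, 0 < S ∧ Ret g N o S S ∧ ∀ u : ℕ → ℝ, 0 < u 0 → (∀ n, Ret g N o (u n) (u (n+1))) →
      Tendsto u atTop (𝓝 S) := by
  have ex : ∀ s, 0 < s → ∃ s'', Ret g N o s s'' := fun s hs => by
    obtain ⟨γ, t1, _, _, _, _, hr⟩ := h.ret_sol hs
    exact ⟨_, hr⟩
  choose! P hP using ex
  obtain ⟨E0, hE, hu⟩ := h.up
  obtain ⟨e0, he, hd⟩ := h.down
  obtain ⟨S, hS0, hPS, hlim⟩ := fixed_attr P (fun s hs => (hP s hs).pos.2)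
    (fun s s' r h1 h2 hr hle => Ret.le h (hP s h1) (hP s' h2) hr hle)
    (fun s s' r h1 h2 hr hle => Ret.lt h hS (hP s h1) (hP s' h2) hr hle)
    (√(2 * e0)) (√(2 * E0)) (Real.sqrt_pos.2 (by linarith))
    (fun s hs hle => by
      obtain ⟨γ, t1, h1, h2, h3, h4, h5⟩ := h.ret_sol hs
      have e := Ret.unique h h5 (hP s hs)
      have hp := h5.pos.2
      have h6 : s ^ 2 ≤ 2 * e0 := by
        have := pow_le_pow_left₀ hs.le hle 2
        rwa [Real.sq_sqrt (by linarith)] at this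
      have := hd γ 0 (s^2/2) (by linarith) h1 (by rw [h2, En_axis g rfl]) t1 h3.le
      rw [En_axis g h4] at this
      rw [← e]
      exact le_of_not_gt fun hc => by nlinarith)
    (fun s hs hle => by
      obtain ⟨γ, t1, h1, h2, h3, h4, h5⟩ := h.ret_sol hs
      have e := Ret.unique h h5 (hP s hs)
      have hp := h5.pos.2
      have h6 : 2 * E0 ≤ s ^ 2 := by
        have := pow_le_pow_left₀ (Real.sqrt_nonneg _) hle 2
        rwa [Real.sq_sqrt (by linarith)] at this
      have := hu γ _ 0 (s^2/2) (by linarith) (fun _ _ => rfl) h1 (by rw [h2, En_axis g rfl]) t1 h3.le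
      rw [En_axis g h4] at this
      rw [← e]
      exact le_of_not_gt fun hc => by nlinarith)
  refine ⟨S, hS0, by have := hP S hS0; rwa [hPS] at this, fun u h0 hu => hlim u h0 fun n => ?_⟩
  exact Ret.unique h (hu n) (hP _ (hu n).pos.1)

lemma Sys.strict (h : Sys g N o ε) (hseq : ∃ xs : ℕ → ℝ, Tendsto xs atTop (𝓝 0) ∧
      ∀ m, ∃ k ∈ Finset.range (N + 1), HgLHS g k (o k) (xs m) ≠ 0) :
    StrictQ N (Qf g o) ∨ StrictQ N (Qf (rg g) (ro o)) := by
  obtain ⟨xs, hx, hk⟩ := hseq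
  by_cases hR : ∀ δ > 0, ∃ x, 0 < x ∧ x < δ ∧ ∃ k ∈ Finset.range (N+1), 0 < HgLHS g k (o k) x
  · exact Or.inl (strictQ h.gh h.ho hR)
  · right
    push Not at hR
    obtain ⟨δ, hδ, hn⟩ := hR
    refine strictQ h.refl.gh h.refl.ho fun η hη => ?_
    obtain ⟨m, hm1, hm2⟩ := ((hx.eventually (gt_mem_nhds hδ)).and
      (hx.eventually (lt_mem_nhds (show -η < 0 by linarith)))).exists
    obtain ⟨k, hkr, hne⟩ := hk m
    have hx0 : xs m ≠ 0 := by
      intro h0; rw [h0] at hne; simp [HgLHS] at hne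
    have hpos : 0 < HgLHS g k (o k) (xs m) := lt_of_le_of_ne (h.hH k hkr _ hx0) hne.symm
    rcases hx0.lt_or_gt with hlt | hgt
    · refine ⟨- xs m, by linarith, by linarith, k, hkr, ?_⟩
      rw [HgLHS_r, neg_neg]; exact hpos
    · have := hn _ hgt hm1 k hkr
      linarith

lemma Sys.nonconst (h : Sys g N o ε) (hγ : IsSolOn (gOddVF g N o) γ (Ici t0))
    (hn : ∃ t₁ ∈ Ici t0, ∃ t₂ ∈ Ici t0, γ t₁ ≠ γ t₂) : γ t0 ≠ 0 := by
  intro h0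
  obtain ⟨R, hR, hb⟩ := h.sol_bdd hγ
  obtain ⟨K, hK, hgr⟩ := h.gron R
  have hz : gOddVF g N o 0 = 0 := by
    rw [vf_eq]; simp [h.gh.gzero]
  have hall : ∀ t, t0 ≤ t → γ t = 0 := by
    intro t ht
    have := hgr γ (fun _ => 0) t0 hγ (fun s _ => by rw [hz]; exact hasDerivAt_const s 0) hb
      (fun _ _ => by simp [hR.le]) t ht
    rw [h0] at this
    simpa using this
  obtain ⟨t₁, h1, t₂, h2, hne⟩ := hn
  exact hne (by rw [hall t₁ h1, hall t₂ h2])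

lemma Sys.attract (h : Sys g N o ε) {S T : ℝ} (hS : 0 < S)
    (hlim : ∀ u : ℕ → ℝ, 0 < u 0 → (∀ n, Ret g N o (u n) (u (n+1))) → Tendsto u atTop (𝓝 S))
    {μ : ℝ → ℝ × ℝ} (hT : 0 < T) (hμ : ∀ t, HasDerivAt μ (gOddVF g N o (μ t)) t) (hμ0 : μ 0 = (0, S))
    (hμT : μ T = (0, S))
    (hγ : IsSolOn (gOddVF g N o) γ (Ici t0)) (h0 : γ t0 ≠ 0) :
    Tendsto (fun t => Metric.infDist (γ t) (range μ)) atTop (𝓝 0) := by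
  obtain ⟨R1, hR1, hb1⟩ := h.sol_bdd hγ
  have hμs : IsSolOn (gOddVF g N o) μ (Ici 0) := fun t _ => hμ t
  obtain ⟨R2, hR2, hb2⟩ := h.sol_bdd hμs
  obtain ⟨K, hK, hgr⟩ := h.gron (max R1 R2)
  -- return times
  let A := {a : ℝ // t0 ≤ a ∧ (γ a).1 = 0 ∧ 0 < (γ a).2}
  have nx : ∀ a : A, ∃ b : A, ∃ τ, a.1 < τ ∧ τ < b.1 ∧ (γ τ).2 = 0 ∧
      (∀ t ∈ Ioo a.1 b.1, (γ t).1 = 0 → (γ t).2 < 0) ∧ Ret g N o (γ a.1).2 (γ b.1).2 := by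
    rintro ⟨a, ha, hx, hy⟩
    obtain ⟨τ, t1, k1, k2, k3, k4, k5, k6, k7⟩ := h.ret (hγ.mono' ha) hx hy
    exact ⟨⟨t1, ha.trans (k1.trans k2).le, k4, k5⟩, τ, k1, k2, k3, k6, k7⟩
  choose nxt τ' q1 q2 q3 q4 q5 using nx
  obtain ⟨a0, ha0⟩ := h.reach hγ h0
  let b : ℕ → A := fun n => nxt^[n] ⟨a0, ha0⟩
  have hb : ∀ n, b (n+1) = nxt (b n) := fun n => Function.iterate_succ_apply' nxt n _
  let a : ℕ → ℝ := fun n => (b n).1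
  let τ : ℕ → ℝ := fun n => τ' (b n)
  have a1 : ∀ n, t0 ≤ a n := fun n => (b n).2.1
  have a2 : ∀ n, (γ (a n)).1 = 0 := fun n => (b n).2.2.1
  have a3 : ∀ n, 0 < (γ (a n)).2 := fun n => (b n).2.2.2
  have a4 : ∀ n, a n < τ n := fun n => q1 _
  have a5 : ∀ n, τ n < a (n+1) := fun n => by simp only [a, hb]; exact q2 _
  have a6 : ∀ n, (γ (τ n)).2 = 0 := fun n => q3 _
  have a7 : ∀ n, ∀ t ∈ Ioo (a n) (a (n+1)), (γ t).1 = 0 → (γ t).2 < 0 := fun n => by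
    simp only [a, hb]; exact q4 _
  have a8 : ∀ n, Ret g N o (γ (a n)).2 (γ (a (n+1))).2 := fun n => by
    simp only [a, hb]; exact q5 _
  have hs : Tendsto (fun n => (γ (a n)).2) atTop (𝓝 S) := hlim _ (a3 0) a8
  have amono : StrictMono a := strictMono_nat_of_lt_succ fun n => (a4 n).trans (a5 n)
  have ainf : Tendsto a atTop atTop := by
    rcases tendsto_atTop_of_monotone amono.monotone with hh | ⟨l, hl⟩
    · exact hh
    · exfalso
      have hl0 : t0 ≤ l := ge_of_tendsto' hl a1
      have hτ : Tendsto τ atTop (𝓝 l) :=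
        tendsto_of_tendsto_of_tendsto_of_le_of_le hl (hl.comp (tendsto_add_atTop_nat 1))
          (fun n => (a4 n).le) (fun n => (a5 n).le)
      have hc : ContinuousAt (fun t => (γ t).2) l := (sol_y hγ (mem_Ici.2 hl0)).continuousAt
      have e1 := tendsto_nhds_unique (hc.tendsto.comp hl) hs
      have e2 := tendsto_nhds_unique (hc.tendsto.comp hτ)
        (tendsto_const_nhds.congr fun n => (a6 n).symm)
      linarith
  -- tracking
  have track : ∀ n t, a n ≤ t → dist (γ t) (μ (t - a n)) ≤ |(γ (a n)).2 - S| * Real.exp (K * (t - a n)) := by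
    intro n t ht
    have := hgr γ (fun t => μ (t - a n)) (a n) (hγ.mono' (a1 n))
      (fun s _ => (hμ (s - a n)).comp_sub_const s (a n))
      (fun s hs => closedBall_subset_closedBall (le_max_left _ _) (hb1 s ((a1 n).trans hs)))
      (fun s hs => closedBall_subset_closedBall (le_max_right _ _) (hb2 (s - a n) (by linarith))) t ht
    refine this.trans (le_of_eq ?_)
    congr 1
    simp only [sub_self, hμ0]
    rw [Prod.dist_eq]
    simp only [a2 n, dist_self, Real.dist_eq]
    exact max_eq_right (abs_nonneg _)
  have small : ∀ ρ > 0, ∀ᶠ n in atTop, ∀ t, a n ≤ t → t ≤ a n + (T + 1) → dist (γ t) (μ (t - a n)) < ρ := by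
    intro ρ hρ
    have : Tendsto (fun n => |(γ (a n)).2 - S| * Real.exp (K * (T+1))) atTop (𝓝 (|S - S| * Real.exp (K * (T+1)))) :=
      ((hs.sub_const S).abs).mul_const _
    rw [sub_self, abs_zero, zero_mul] at this
    filter_upwards [this.eventually (gt_mem_nhds hρ)] with n hn t h1 h2
    refine (track n t h1).trans_lt (lt_of_le_of_lt ?_ hn)
    gcongr
    linarith
  -- crossing
  have hμ' : IsSolOn (gOddVF g N o) μ univ := fun t _ => hμ t
  have ey : ∀ᶠ u in 𝓝 T, S / 2 < (μ u).2 :=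
    (sol_y hμ' (mem_univ T)).continuousAt.eventually (lt_mem_nhds (by simp only [hμT]; linarith))
  obtain ⟨η, hη, hηy⟩ := Metric.eventually_nhds_iff.1 ey
  have sg := sign_of_der (sol_x hμ' (mem_univ T)).neg (by simp [hμT]) (by simp [hμT, hS])
  obtain ⟨u1, hu1, hu1'⟩ := (sg.1.and (Ioo_mem_nhdsLT (show max 0 (T - η) < T from max_lt hT (by linarith)))).exists
  obtain ⟨u2, hu2, hu2'⟩ := (sg.2.and (Ioo_mem_nhdsGT (show T < min (T+1) (T+η) from lt_min (by linarith) (by linarith)))).exists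
  simp only [Pi.neg_apply, Left.neg_pos_iff, Left.neg_neg_iff] at hu1 hu2
  rw [max_lt_iff] at hu1'
  rw [lt_min_iff] at hu2'
  have step : ∀ᶠ n in atTop, a (n+1) ≤ a n + (T + 1) := by
    filter_upwards [small (min (min (-(μ u1).1) (μ u2).1) (S/2)) (by
      have : 0 < -(μ u1).1 := by linarith
      positivity)] with n hn
    have hd : ∀ u, 0 ≤ u → u ≤ T + 1 → |(γ (a n + u)).1 - (μ u).1| < min (-(μ u1).1) (μ u2).1 ∧
        |(γ (a n + u)).2 - (μ u).2| < S/2 := by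
      intro u h1 h2
      have := hn (a n + u) (by linarith) (by linarith)
      rw [add_sub_cancel_left, Prod.dist_eq, Real.dist_eq, Real.dist_eq, max_lt_iff] at this
      exact ⟨this.1.trans_le (min_le_left _ _), this.2.trans_le (min_le_right _ _)⟩
    have k1 := (abs_lt.1 ((hd u1 hu1'.1.1.le (by linarith [hu1'.2])).1.trans_le (min_le_left _ _))).2
    have k2 := (abs_lt.1 ((hd u2 (by linarith) (by linarith)).1.trans_le (min_le_right _ _))).1
    obtain ⟨c, hc1, hc2⟩ := intermediate_value_Icc (a := a n + u1) (b := a n + u2) (by linarith)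
      (f := fun t => (γ t).1) (fun t ht => (sol_x hγ (mem_Ici.2 (by linarith [ht.1, a1 n]))).continuousAt.continuousWithinAt)
      (show (0:ℝ) ∈ Icc _ _ from ⟨by linarith, by linarith⟩)
    by_contra hcon
    push Not at hcon
    have hcy := a7 n c ⟨by linarith [hc1.1], by linarith [hc1.2]⟩ hc2
    have k3 := (abs_lt.1 (hd (c - a n) (by linarith [hc1.1]) (by linarith [hc1.2])).2).1
    rw [add_sub_cancel] at k3
    have := hηy (y := c - a n) (by
      rw [Real.dist_eq, abs_lt]
      constructor <;> linarith [hc1.1, hc1.2])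
    linarith
  rw [Metric.tendsto_atTop]
  intro ρ hρ
  obtain ⟨n0, hn0⟩ := eventually_atTop.1 (step.and (small ρ hρ))
  refine ⟨a n0, fun t ht => ?_⟩
  have hex : ∃ m, t < a m := (ainf.eventually_gt_atTop t).exists
  classical
  have hm := Nat.find_spec hex
  have hmin := fun k => Nat.find_min hex (m := k)
  set m := Nat.find hex
  have hmn : n0 < m := by
    by_contra hc
    push Not at hc
    have := amono.monotone hc
    linarith
  obtain ⟨n, hn⟩ : ∃ n, m = n + 1 := ⟨m - 1, by omega⟩
  have h1 : a n ≤ t := not_lt.1 (hmin n (by omega))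
  obtain ⟨h2, h3⟩ := hn0 n (by omega)
  rw [hn] at hm
  have h4 := h3 t h1 (by linarith)
  rw [Real.dist_eq, sub_zero, abs_of_nonneg infDist_nonneg]
  exact (infDist_le_dist_of_mem (mem_range_self _)).trans_lt h4

lemma Sys.main (h : Sys g N o ε) (hseq : ∃ xs : ℕ → ℝ, Tendsto xs atTop (𝓝 0) ∧
      ∀ m, ∃ k ∈ Finset.range (N + 1), HgLHS g k (o k) (xs m) ≠ 0) :
    ∃ (μ : ℝ → ℝ × ℝ) (T : ℝ), IsLimitCycle (gOddVF g N o) μ T ∧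
      (∀ (μ' : ℝ → ℝ × ℝ) (T' : ℝ), IsLimitCycle (gOddVF g N o) μ' T' →
        range μ' = range μ) ∧
      ∀ (γ : ℝ → ℝ × ℝ) (t₀ : ℝ), IsSolOn (gOddVF g N o) γ (Ici t₀) →
        (∃ t₁ ∈ Ici t₀, ∃ t₂ ∈ Ici t₀, γ t₁ ≠ γ t₂) →
        Tendsto (fun t => Metric.infDist (γ t) (range μ)) atTop (𝓝 0) := by
  obtain ⟨S, hS, hSS, hlim⟩ := h.fix (h.strict hseq)
  obtain ⟨μ, hμ0, hμs, hper⟩ := h.exists_sol (0, S)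
  obtain ⟨τ, T, k1, k2, k3, k4, k5, k6, k7⟩ := h.ret hμs (by simp [hμ0]) (by simpa [hμ0] using hS)
  have hT : 0 < T := k1.trans k2
  have hμT : μ T = (0, S) := by
    rw [hμ0] at k7
    exact Prod.ext k4 (Ret.unique h k7 hSS)
  obtain ⟨hp, hμ⟩ := hper T hT hμT
  have att : ∀ (γ : ℝ → ℝ × ℝ) (t₀ : ℝ), IsSolOn (gOddVF g N o) γ (Ici t₀) →
        (∃ t₁ ∈ Ici t₀, ∃ t₂ ∈ Ici t₀, γ t₁ ≠ γ t₂) →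
        Tendsto (fun t => Metric.infDist (γ t) (range μ)) atTop (𝓝 0) := fun γ t₀ hγ hn =>
    h.attract hS hlim hT hμ hμ0 hμT hγ (h.nonconst hγ hn)
  have hcyc : IsCycle (gOddVF g N o) μ T := by
    refine ⟨hμ, hT, hp, 0, τ, fun he => ?_⟩
    rw [hμ0] at he
    rw [← he] at k3
    simp at k3; linarith
  have cper : Function.Periodic μ T := hp
  have ccont : Continuous μ := continuous_iff_continuousAt.2 fun t => (hμ t).continuousAt
  have hcomp : IsCompact (range μ) := cper.compact_of_continuous hT.ne' ccont
  have uniq : ∀ (μ' : ℝ → ℝ × ℝ) (T' : ℝ), IsCycle (gOddVF g N o) μ' T' → range μ' = range μ := by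
    rintro μ' T' ⟨hμ', hT', hp', t₁, t₂, hne⟩
    have pn : ∀ (n : ℕ) t, μ' (t + n * T') = μ' t := fun n t => (Function.Periodic.nat_mul hp' n) t
    have big : ∀ t : ℝ, ∃ n : ℕ, 0 ≤ t + n * T' := fun t => by
      obtain ⟨n, hn⟩ := exists_nat_ge (-t / T')
      rw [div_le_iff₀ hT'] at hn
      exact ⟨n, by linarith⟩
    obtain ⟨n1, hn1⟩ := big t₁
    obtain ⟨n2, hn2⟩ := big t₂
    have hlim' := att μ' 0 (fun t _ => hμ' t) ⟨_, hn1, _, hn2, by rw [pn, pn]; exact hne⟩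
    have hmem : ∀ t, μ' t ∈ range μ := by
      intro t
      rw [hcomp.isClosed.mem_iff_infDist_zero (range_nonempty μ)]
      have ht : Tendsto (fun n : ℕ => t + n * T') atTop atTop :=
        tendsto_atTop_add_const_left _ _ (tendsto_natCast_atTop_atTop.atTop_mul_const hT')
      have := hlim'.comp ht
      refine tendsto_nhds_unique ?_ this
      refine tendsto_const_nhds.congr fun n => ?_
      simp only [Function.comp, pn]
    obtain ⟨R, hR⟩ := hcomp.isBounded.subset_closedBall (0 : ℝ × ℝ)
    obtain ⟨b, hb⟩ := hmem 0
    have he : μ' = fun t => μ (t + b) := by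
      refine h.unique (R := R) hμ' (fun t => (hμ (t + b)).shift) (fun t => hR (hmem t))
        (fun t => hR (mem_range_self _)) (t0 := 0) ?_
      simp [hb]
    rw [he]
    ext p
    constructor
    · rintro ⟨t, rfl⟩; exact mem_range_self _
    · rintro ⟨t, rfl⟩; exact ⟨t - b, by simp⟩
  exact ⟨μ, T, ⟨hcyc, univ, isOpen_univ, subset_univ _, fun γ' T' hc hne => absurd (uniq γ' T' hc) hne⟩,
    fun μ' T' hc => uniq μ' T' hc.1, att⟩
end

/-- for `g ∈ C¹(ℝ)` with `g'(0) > 0`, `x g(x) > 0` for `x ≠ 0`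
and `G → +∞` at `±∞`, if every odd coefficient satisfies (H_g^{2k+1}) with
strictness along some sequence `x_m → 0`, `f₁(0) < 0`, `f₁ > 0` outside
`[−ε,ε]`, and some `f_{2k̄+1} > 0` on `[−ε,ε]`, then the system
ẋ = y, ẏ = −g(x) − Σ_k f_{2k+1}(x) y^{2k+1} has exactly one limit cycle,
which attracts every non-constant solution. -/
theorem statement15 (g : ℝ → ℝ) (hg : ContDiff ℝ 1 g)
    (hg0 : 0 < deriv g 0)
    (hgsign : ∀ x : ℝ, x ≠ 0 → 0 < x * g x)
    (hGtop : Tendsto (Gfun g) atTop atTop)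
    (hGbot : Tendsto (Gfun g) atBot atTop)
    (N : ℕ) (o : ℕ → ℝ → ℝ)
    (ho : ∀ k ∈ Finset.range (N + 1), ContDiff ℝ 1 (o k))
    (hHg : ∀ k ∈ Finset.range (N + 1), ∀ x : ℝ, x ≠ 0 →
      0 ≤ HgLHS g k (o k) x)
    (hseq : ∃ xs : ℕ → ℝ, Tendsto xs atTop (𝓝 0) ∧
      ∀ m, ∃ k ∈ Finset.range (N + 1), HgLHS g k (o k) (xs m) ≠ 0)
    (hf10 : o 0 0 < 0)
    (ε : ℝ) (hε : 0 < ε)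
    (hf1 : ∀ x : ℝ, ε < |x| → 0 < o 0 x)
    (hkbar : ∃ kbar ∈ Finset.Icc 1 N, ∀ x ∈ Icc (-ε) ε, 0 < o kbar x) :
    ∃ (μ : ℝ → ℝ × ℝ) (T : ℝ), IsLimitCycle (gOddVF g N o) μ T ∧
      (∀ (μ' : ℝ → ℝ × ℝ) (T' : ℝ), IsLimitCycle (gOddVF g N o) μ' T' →
        range μ' = range μ) ∧
      ∀ (γ : ℝ → ℝ × ℝ) (t₀ : ℝ), IsSolOn (gOddVF g N o) γ (Ici t₀) →
        (∃ t₁ ∈ Ici t₀, ∃ t₂ ∈ Ici t₀, γ t₁ ≠ γ t₂) →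
        Tendsto (fun t => Metric.infDist (γ t) (range μ)) atTop (𝓝 0) := by
  exact Sys.main (ε := ε) ⟨⟨hg, hg0, hgsign, hGtop, hGbot⟩, ho, hHg, hf10, hε, hf1, hkbar⟩ hseq
end
end

section
/- Let k ≥ 1 be an integer and let f : ℝ → ℝ be continuously differentiable with x·f'(x) + 2k·f(x) ≥ 0 for all x ∈ ℝ. Then f(x) ≥ 0 for all x ∈ ℝ. -/
/-- if `f` is C¹ and `x f'(x) + 2k f(x) ≥ 0` on `ℝ` for some
integer `k ≥ 1`, then `f ≥ 0` on `ℝ`. -/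
theorem statement16 (k : ℕ) (hk : 1 ≤ k) (f : ℝ → ℝ) (hf : ContDiff ℝ 1 f)
    (h : ∀ x : ℝ, x * deriv f x + 2 * (k : ℝ) * f x ≥ 0) :
    ∀ x : ℝ, f x ≥ 0 := by
  intro x
  have hd : Differentiable ℝ f := hf.differentiable (by norm_num)
  have hg : ∀ t : ℝ, HasDerivAt (fun t : ℝ => t ^ (2 * k) * f (t * x))
      (t ^ (2 * k - 1) * ((t * x) * deriv f (t * x) + 2 * (k : ℝ) * f (t * x))) t := by
    intro t
    have h1 : HasDerivAt (fun t : ℝ => t * x) x t := by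
      simpa using (hasDerivAt_id t).mul_const x
    have h2 : HasDerivAt (fun t : ℝ => f (t * x)) (deriv f (t * x) * x) t :=
      HasDerivAt.comp t (hd (t * x)).hasDerivAt h1
    have h3 := (hasDerivAt_pow (2 * k) t).mul h2
    refine h3.congr_deriv ?_
    have h4 : t ^ (2 * k) = t ^ (2 * k - 1) * t := by
      rw [← pow_succ]; congr 1; omega
    rw [h4]; push_cast; ring
  have hm : MonotoneOn (fun t : ℝ => t ^ (2 * k) * f (t * x)) (Set.Icc 0 1) := by
    apply monotoneOn_of_deriv_nonneg (convex_Icc 0 1)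
    · exact fun t _ => (hg t).continuousAt.continuousWithinAt
    · exact fun t _ => (hg t).differentiableAt.differentiableWithinAt
    · intro t ht
      rw [interior_Icc] at ht
      rw [(hg t).deriv]
      exact mul_nonneg (pow_nonneg ht.1.le _) (h _)
  have := hm (Set.left_mem_Icc.2 zero_le_one) (Set.right_mem_Icc.2 zero_le_one) zero_le_one
  have hk0 : 2 * k ≠ 0 := by omega
  simpa [zero_pow hk0, show k ≠ 0 by omega] using this
end

section
/- Let a < 0 < b and let g ∈ C¹((a,b), ℝ) satisfy x·g(x) > 0 for all x ≠ 0 in (a,b) and g'(0) > 0. Set G(x) = ∫₀^x g(s) ds and α(x) = σ(x)·√(2·G(x)), where σ is the sign function. Then lim_{x→0} g(x)/α(x) = √(g'(0)); moreover α is differentiable at 0 with α'(0) = √(g'(0)), while for x ≠ 0 one has α'(x) = σ(x)·g(x)/√(2·G(x)). -/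
open Set Filter Real Topology intervalIntegral

noncomputable section

/-- The first component `α(x) = σ(x)·√(2G(x))` of the Conti–Filippov
transformation. -/
def alphaCF (g : ℝ → ℝ) (x : ℝ) : ℝ := Real.sign x * Real.sqrt (2 * Gfun g x)

/-- for `g ∈ C¹((a,b))` with `x g(x) > 0` for `x ≠ 0` and
`g'(0) > 0`, one has `g(x)/α(x) → √(g'(0))` as `x → 0`; moreover `α` is
differentiable at `0` with `α'(0) = √(g'(0))`, while for `x ≠ 0` in `(a,b)`,
`α'(x) = σ(x)·g(x)/√(2G(x))`. -/
theorem statement19 (a b : ℝ) (ha : a < 0) (hb : 0 < b)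
    (g : ℝ → ℝ) (hg : ContDiffOn ℝ 1 g (Ioo a b))
    (hgsign : ∀ x ∈ Ioo a b, x ≠ 0 → 0 < x * g x)
    (hg0 : 0 < deriv g 0) :
    Tendsto (fun x => g x / alphaCF g x) (𝓝[(Ioo a b) \ {0}] 0)
        (𝓝 (Real.sqrt (deriv g 0))) ∧
    HasDerivAt (alphaCF g) (Real.sqrt (deriv g 0)) 0 ∧
    ∀ x ∈ Ioo a b, x ≠ 0 →
      HasDerivAt (alphaCF g)
        (Real.sign x * g x / Real.sqrt (2 * Gfun g x)) x := by
  have h0 : (0:ℝ) ∈ Ioo a b := ⟨ha, hb⟩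
  have hcont : ContinuousOn g (Ioo a b) := hg.continuousOn
  have hgc : ∀ x ∈ Ioo a b, ContinuousAt g x := fun x hx =>
    hcont.continuousAt (isOpen_Ioo.mem_nhds hx)
  have hsub : ∀ x ∈ Ioo a b, uIcc 0 x ⊆ Ioo a b := fun x hx =>
    (convex_Ioo a b).ordConnected.uIcc_subset h0 hx
  have hint : ∀ x ∈ Ioo a b, IntervalIntegrable g MeasureTheory.volume 0 x := fun x hx =>
    (hcont.mono (hsub x hx)).intervalIntegrable
  have hG : ∀ x ∈ Ioo a b, HasDerivAt (Gfun g) (g x) x := by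
    intro x hx
    exact intervalIntegral.integral_hasDerivAt_right (hint x hx)
      (hcont.stronglyMeasurableAtFilter isOpen_Ioo x hx) (hgc x hx)
  have hGpos : ∀ x ∈ Ioo a b, x ≠ 0 → 0 < Gfun g x := by
    intro x hx hne
    rcases lt_or_gt_of_ne hne with h | h
    · have : 0 < ∫ s in x..0, -g s := by
        apply intervalIntegral.intervalIntegral_pos_of_pos_on (hint x hx).symm.neg _ h
        intro s hs
        have := hgsign s ⟨hx.1.trans hs.1, hs.2.trans hb⟩ hs.2.ne
        have h2 := hs.2
        exact neg_pos.2 (neg_of_mul_pos_right this h2.le)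
      rw [intervalIntegral.integral_neg, ← intervalIntegral.integral_symm] at this
      exact this
    · apply intervalIntegral.intervalIntegral_pos_of_pos_on (hint x hx) _ h
      intro s hs
      have := hgsign s ⟨ha.trans hs.1, hs.2.trans hx.2⟩ hs.1.ne'
      exact pos_of_mul_pos_right this hs.1.le
  have hg' : HasDerivAt g (deriv g 0) 0 :=
    (differentiableAt_of_deriv_ne_zero hg0.ne').hasDerivAt
  have hmem : ∀ᶠ x in 𝓝[≠] (0:ℝ), x ∈ Ioo a b :=
    nhdsWithin_le_nhds (isOpen_Ioo.mem_nhds h0)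
  have hne : ∀ᶠ x in 𝓝[≠] (0:ℝ), x ≠ 0 := self_mem_nhdsWithin
  have hgz : g 0 = 0 := by
    have ht : Tendsto g (𝓝 0) (𝓝 (g 0)) := hgc 0 h0
    apply le_antisymm
    · refine le_of_tendsto (ht.mono_left (nhdsWithin_le_nhds (s := Iio 0))) ?_
      filter_upwards [Ioo_mem_nhdsLT ha] with x hx
      exact (neg_of_mul_pos_right (hgsign x ⟨hx.1, hx.2.trans hb⟩ hx.2.ne) hx.2.le).le
    · refine ge_of_tendsto (ht.mono_left (nhdsWithin_le_nhds (s := Ioi 0))) ?_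
      filter_upwards [Ioo_mem_nhdsGT hb] with x hx
      exact (pos_of_mul_pos_right (hgsign x ⟨ha.trans hx.1, hx.2⟩ hx.1.ne') hx.1.le).le
  have hgx : Tendsto (fun x => g x / x) (𝓝[≠] 0) (𝓝 (deriv g 0)) := by
    have := hasDerivAt_iff_tendsto_slope.1 hg'
    refine this.congr fun x => ?_
    rw [slope_def_field, hgz, sub_zero, sub_zero]
  have hGz : Gfun g 0 = 0 := by simp [Gfun]
  have hGx : Tendsto (fun x => 2 * Gfun g x / x ^ 2) (𝓝[≠] 0) (𝓝 (deriv g 0)) := by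
    refine HasDerivAt.lhopital_zero_nhdsNE (f' := fun x => 2 * g x) (g' := fun x => 2 * x)
      ?_ ?_ ?_ ?_ ?_ ?_
    · filter_upwards [hmem] with x hx using (hG x hx).const_mul 2
    · filter_upwards with x
      simpa using hasDerivAt_pow 2 x
    · filter_upwards [hne] with x hx using mul_ne_zero two_ne_zero hx
    · have := ((hG 0 h0).const_mul 2).continuousAt.tendsto
      rw [hGz, mul_zero] at this
      exact this.mono_left nhdsWithin_le_nhds
    · have : Tendsto (fun x : ℝ => x ^ 2) (𝓝 0) (𝓝 (0 ^ 2)) := (continuous_pow 2).tendsto 0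
      rw [zero_pow two_ne_zero] at this
      exact this.mono_left nhdsWithin_le_nhds
    · refine hgx.congr fun x => ?_
      rw [mul_div_mul_left _ _ two_ne_zero]
  have hα : Tendsto (fun x => alphaCF g x / x) (𝓝[≠] 0) (𝓝 (Real.sqrt (deriv g 0))) := by
    refine hGx.sqrt.congr' ?_
    filter_upwards [hne] with x hx
    rw [Real.sqrt_div' _ (sq_nonneg x), Real.sqrt_sq_eq_abs, alphaCF]
    rcases lt_or_gt_of_ne hx with h | h
    · rw [Real.sign_of_neg h, abs_of_neg h, div_neg]; ring
    · rw [Real.sign_of_pos h, abs_of_pos h, one_mul]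
  refine ⟨?_, ?_, ?_⟩
  · have hs : Real.sqrt (deriv g 0) ≠ 0 := (Real.sqrt_pos.2 hg0).ne'
    have := hgx.div hα hs
    rw [Real.div_sqrt] at this
    refine (this.congr' ?_).mono_left (nhdsWithin_mono _ fun x hx => hx.2)
    filter_upwards [hne] with x hx
    exact div_div_div_cancel_right₀ hx _ _
  · rw [hasDerivAt_iff_tendsto_slope]
    refine hα.congr fun x => ?_
    simp [slope_def_field, alphaCF]
  · intro x hx hx0
    have hp := hGpos x hx hx0
    have h1 : HasDerivAt (fun y => Real.sqrt (2 * Gfun g y)) _ x :=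
      ((hG x hx).const_mul 2).sqrt (by positivity)
    have h2 := h1.const_mul (Real.sign x)
    have hev : alphaCF g =ᶠ[𝓝 x] fun y => Real.sign x * Real.sqrt (2 * Gfun g y) := by
      rcases lt_or_gt_of_ne hx0 with h | h
      · filter_upwards [Iio_mem_nhds h] with y hy
        rw [alphaCF, Real.sign_of_neg h, Real.sign_of_neg hy]
      · filter_upwards [Ioi_mem_nhds h] with y hy
        rw [alphaCF, Real.sign_of_pos h, Real.sign_of_pos hy]
    refine (h2.congr_of_eventuallyEq hev).congr_deriv ?_
    rw [mul_div_mul_left _ _ two_ne_zero, mul_div_assoc]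
end
end
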